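/- arXiv:1711.02337 — 2 statements merged into one kernel-verified Lean document; each statement's English description precedes it below -/
import Mathlib

section
/- For every nonnegative integer n, the identity E_{2n+1}(q)/(q;q)_{2n+1} = Σ_{D∈Dyck_{2n}} Π_{(a,b)∈D} q^b/(1−q^{2b+1}) holds in the field of rational functions ℚ(q), where the product runs over all lattice points (a,b) of the Dyck path D. -/
open Finset

attribute [local instance 10] Classical.propDecidable

noncomputable section

namespace Paper

/-! ### Words and permutation statistics (all words are 1-based). -/

/-- The word (one-line notation, 1-based) of a permutation of `{1, …, N}`:
`word π i = π(i)` for `1 ≤ i ≤ N`, and `0` otherwise. -/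
def word {N : ℕ} (π : Equiv.Perm (Fin N)) (i : ℕ) : ℕ :=
  if h : 1 ≤ i ∧ i ≤ N then (π ⟨i - 1, by omega⟩ : ℕ) + 1 else 0

/-- The major index of a word of length `N`: the sum of the descents. -/
def majW (N : ℕ) (w : ℕ → ℕ) : ℕ :=
  ∑ i ∈ Finset.Icc 1 (N - 1), if w (i + 1) < w i then i else 0

/-- The number of inversions of a word of length `N`. -/
def invW (N : ℕ) (w : ℕ → ℕ) : ℕ :=
  (((Finset.Icc 1 N) ×ˢ (Finset.Icc 1 N)).filter
    fun p => p.1 < p.2 ∧ w p.2 < w p.1).card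

/-- The number of descents of a word of length `m`. -/
def desW (m : ℕ) (w : ℕ → ℕ) : ℕ :=
  ((Finset.Icc 1 (m - 1)).filter fun i => w (i + 1) < w i).card

/-- The number of ascents of a word of length `m`. -/
def ascW (m : ℕ) (w : ℕ → ℕ) : ℕ :=
  ((Finset.Icc 1 (m - 1)).filter fun i => w i < w (i + 1)).card

/-- The number of non-descents of a word of length `m`. -/
def ndesW (m : ℕ) (w : ℕ → ℕ) : ℕ :=
  ((Finset.Icc 1 m).filter fun i => i = m ∨ w i < w (i + 1)).card

/-- The number of non-ascents of a word of length `m`. -/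
def nascW (m : ℕ) (w : ℕ → ℕ) : ℕ :=
  ((Finset.Icc 1 m).filter fun i => i = m ∨ ¬ w i < w (i + 1)).card

/-- `π_e = π₂π₄⋯`, the subword of even-position entries, as a 1-based word. -/
def evenWord {N : ℕ} (π : Equiv.Perm (Fin N)) (j : ℕ) : ℕ := word π (2 * j)

/-- `π_o = π₁π₃⋯`, the subword of odd-position entries, as a 1-based word. -/
def oddWord {N : ℕ} (π : Equiv.Perm (Fin N)) (j : ℕ) : ℕ := word π (2 * j - 1)

/-- A word of length `N` is alternating: `w₁ < w₂ > w₃ < w₄ > ⋯`. -/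
def IsAltW (N : ℕ) (w : ℕ → ℕ) : Prop :=
  ∀ i ∈ Finset.Icc 1 (N - 1), (i % 2 = 1 → w i < w (i + 1)) ∧ (i % 2 = 0 → w (i + 1) < w i)

/-- A word of length `N` is reverse alternating: `w₁ > w₂ < w₃ > w₄ < ⋯`. -/
def IsRaltW (N : ℕ) (w : ℕ → ℕ) : Prop :=
  ∀ i ∈ Finset.Icc 1 (N - 1), (i % 2 = 1 → w (i + 1) < w i) ∧ (i % 2 = 0 → w i < w (i + 1))

/-- `Alt_N`, the set of alternating permutations of `{1, …, N}`. -/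
def altPerms (N : ℕ) : Finset (Equiv.Perm (Fin N)) :=
  Finset.univ.filter fun π => IsAltW N (word π)

/-- `Ralt_N`, the set of reverse alternating permutations of `{1, …, N}`. -/
def raltPerms (N : ℕ) : Finset (Equiv.Perm (Fin N)) :=
  Finset.univ.filter fun π => IsRaltW N (word π)

/-- `κ_N = (1)(2,3)(4,5)⋯`, acting on the 1-based values `{1, …, N}`. -/
def kappaNat (N j : ℕ) : ℕ :=
  if j % 2 = 0 ∧ 2 ≤ j ∧ j + 1 ≤ N then j + 1
  else if j % 2 = 1 ∧ 3 ≤ j ∧ j ≤ N then j - 1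
  else j

/-- `η_N = (1,2)(3,4)⋯`, acting on the 1-based values `{1, …, N}`. -/
def etaNat (N j : ℕ) : ℕ :=
  if j % 2 = 1 ∧ j + 1 ≤ N then j + 1
  else if j % 2 = 0 ∧ 2 ≤ j ∧ j ≤ N then j - 1
  else j

/-- `maj(π⁻¹)`. -/
def majInv (N : ℕ) (π : Equiv.Perm (Fin N)) : ℕ := majW N (word π.symm)

/-- `maj(κ_N π⁻¹)`. -/
def majKappaInv (N : ℕ) (π : Equiv.Perm (Fin N)) : ℕ :=
  majW N fun i => kappaNat N (word π.symm i)

/-- `maj(η_N π⁻¹)`. -/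
def majEtaInv (N : ℕ) (π : Equiv.Perm (Fin N)) : ℕ :=
  majW N fun i => etaNat N (word π.symm i)

/-- The reversal permutation `i ↦ N + 1 - i` of `Fin N`. -/
def revPerm (N : ℕ) : Equiv.Perm (Fin N) :=
  ⟨Fin.rev, Fin.rev, fun i => Fin.rev_rev i, fun i => Fin.rev_rev i⟩

/-- `φ(π)ᵢ = (N+1) - π_{N+1-i}`. -/
def phiMap {N : ℕ} (π : Equiv.Perm (Fin N)) : Equiv.Perm (Fin N) :=
  ((revPerm N).trans π).trans (revPerm N)

/-! ### Lattice paths.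

A path with `L` unit steps is encoded by `s : Fin L → Bool` (`true` = up-step `(1,1)`,
`false` = down-step `(1,-1)`). -/

/-- The vertical displacement of the `j`-th step. -/
def stepVal {L : ℕ} (s : Fin L → Bool) (j : ℕ) : ℤ :=
  if h : j < L then (if s ⟨j, h⟩ then 1 else -1) else 0

/-- The height of the path after `i` steps. -/
def pht {L : ℕ} (s : Fin L → Bool) (i : ℕ) : ℤ := ∑ j ∈ Finset.range i, stepVal s j

/-- A Dyck path: stays (weakly) above the `x`-axis and ends at height `0`. -/
def IsDyck {L : ℕ} (s : Fin L → Bool) : Prop :=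
  (∀ i ∈ Finset.range (L + 1), 0 ≤ pht s i) ∧ pht s L = 0

/-- The Dyck paths with `L` steps. -/
def dyckPaths (L : ℕ) : Finset (Fin L → Bool) := Finset.univ.filter fun s => IsDyck s

/-- The (indices of the) valleys of a path: a down-step followed by an up-step. -/
def valleys {L : ℕ} (s : Fin L → Bool) : Finset ℕ :=
  (Finset.Icc 1 (L - 1)).filter fun i => stepVal s (i - 1) = -1 ∧ stepVal s i = 1

/-- The (indices of the) peaks of a path: an up-step followed by a down-step. -/
def peaks {L : ℕ} (s : Fin L → Bool) : Finset ℕ :=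
  (Finset.Icc 1 (L - 1)).filter fun i => stepVal s (i - 1) = 1 ∧ stepVal s i = -1

/-- The (indices of the) high peaks of a path: peaks of height at least `2`. -/
def highPeaks {L : ℕ} (s : Fin L → Bool) : Finset ℕ :=
  (peaks s).filter fun i => 2 ≤ pht s i

/-- The height over abscissa `x` of a path starting at `(-m, 0)`. -/
def aht (m : ℕ) {L : ℕ} (s : Fin L → Bool) (x : ℤ) : ℤ := pht s (x + m).toNat

/-- `D₁ < D₂`, for `D₁` starting at `(-m₁,0)` and `D₂` at `(-m₂,0)`, `m₁ ≤ m₂`: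
strictly below on the common range of abscissas. -/
def PathLT (m₁ m₂ : ℕ) {L₁ L₂ : ℕ} (s₁ : Fin L₁ → Bool) (s₂ : Fin L₂ → Bool) : Prop :=
  ∀ x ∈ Finset.Icc (-(m₁ : ℤ)) (m₁ : ℤ), aht m₁ s₁ x < aht m₂ s₂ x

/-- `D₁ ≤ D₂`: weakly below, sharing no step. -/
def PathLE (m₁ m₂ : ℕ) {L₁ L₂ : ℕ} (s₁ : Fin L₁ → Bool) (s₂ : Fin L₂ → Bool) : Prop :=
  (∀ x ∈ Finset.Icc (-(m₁ : ℤ)) (m₁ : ℤ), aht m₁ s₁ x ≤ aht m₂ s₂ x) ∧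
    ∀ x ∈ Finset.Icc (-(m₁ : ℤ)) ((m₁ : ℤ) - 1),
      ¬(aht m₁ s₁ x = aht m₂ s₂ x ∧ aht m₁ s₁ (x + 1) = aht m₂ s₂ (x + 1))

/-- The abscissas of the common lattice points of two paths. -/
def interPts (m₁ m₂ : ℕ) {L₁ L₂ : ℕ} (s₁ : Fin L₁ → Bool) (s₂ : Fin L₂ → Bool) : Finset ℤ :=
  (Finset.Icc (-(m₁ : ℤ)) (m₁ : ℤ)).filter fun x => aht m₁ s₁ x = aht m₂ s₂ x

/-- `Dyck^k_{2n}`: tuples `(D₁, …, D_k)` with `D_i ∈ Dyck((-n-2i+2,0) → (n+2i-2,0))`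
(0-based: `D_i` has half-length `n + 2i`). -/
abbrev DyckTuple (n k : ℕ) := ∀ i : Fin k, Fin (2 * (n + 2 * (i : ℕ))) → Bool

/-- The tuples `(D₁ ≤ D₂ ≤ ⋯ ≤ D_k) ∈ Dyck^k_{2n}`. -/
def weakTuples (n k : ℕ) : Finset (DyckTuple n k) :=
  Finset.univ.filter fun D =>
    (∀ i : Fin k, IsDyck (D i)) ∧
      ∀ (i : ℕ) (h : i + 1 < k),
        PathLE (n + 2 * i) (n + 2 * (i + 1)) (D ⟨i, by omega⟩) (D ⟨i + 1, h⟩)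

/-- The tuples `(D₁ < D₂ < ⋯ < D_k) ∈ Dyck^k_{2n}`. -/
def strictTuples (n k : ℕ) : Finset (DyckTuple n k) :=
  Finset.univ.filter fun D =>
    (∀ i : Fin k, IsDyck (D i)) ∧
      ∀ (i : ℕ) (h : i + 1 < k),
        PathLT (n + 2 * i) (n + 2 * (i + 1)) (D ⟨i, by omega⟩) (D ⟨i + 1, h⟩)

/-- The lattice points of a path starting at `(-m, 0)`, as a finite subset of `ℤ × ℤ`. -/
def pathPoints (m : ℕ) {L : ℕ} (s : Fin L → Bool) : Finset (ℤ × ℤ) :=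
  (Finset.range (L + 1)).image fun t : ℕ => (-(m : ℤ) + (t : ℤ), pht s t)

/-- The non-valley lattice points of a path starting at `(-m, 0)`. -/
def nonValleyPoints (m : ℕ) {L : ℕ} (s : Fin L → Bool) : Finset (ℤ × ℤ) :=
  ((Finset.range (L + 1)).filter fun t => t ∉ valleys s).image
    fun t : ℕ => (-(m : ℤ) + (t : ℤ), pht s t)

section Weights

variable {F : Type*} [Field F]

/-- The `i`-th lattice point (in `ℤ × ℕ`) of a path starting at `(a, 0)`. -/
def ptOf (a : ℤ) {L : ℕ} (s : Fin L → Bool) (i : ℕ) : ℤ × ℕ := (a + i, (pht s i).toNat)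

/-- `wt_V(D) = ∏_{p ∈ D} wt(p) · ∏_{p ∈ V(D)} w̃t(p)` for a path starting at `(a, 0)`. -/
def wtVal (wt wte : ℤ × ℕ → F) (a : ℤ) {L : ℕ} (s : Fin L → Bool) : F :=
  (∏ i ∈ Finset.range (L + 1), wt (ptOf a s i)) * ∏ i ∈ valleys s, wte (ptOf a s i)

/-- `wt_HP(D) = ∏_{p ∈ D} wt(p) · ∏_{p ∈ HP(D)} w̃t(p)` for a path starting at `(a, 0)`. -/
def wtHigh (wt wte : ℤ × ℕ → F) (a : ℤ) {L : ℕ} (s : Fin L → Bool) : F :=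
  (∏ i ∈ Finset.range (L + 1), wt (ptOf a s i)) * ∏ i ∈ highPeaks s, wte (ptOf a s i)

/-- `∏_{p ∈ D₁ ∩ D₂} f(p)`, for `D₁` starting at `(-m₁,0)` and `D₂` at `(-m₂,0)`. -/
def interProd (f : ℤ × ℕ → F) (m₁ m₂ : ℕ) {L₁ L₂ : ℕ}
    (s₁ : Fin L₁ → Bool) (s₂ : Fin L₂ → Bool) : F :=
  ∏ x ∈ interPts m₁ m₂ s₁ s₂, f (x, (aht m₁ s₁ x).toNat)

/-- The sum over `(D₁ ≤ ⋯ ≤ D_k) ∈ Dyck^k_{2n}` of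
`wt_V(D₁)⋯wt_V(D_k) ∏_{i=1}^{k-1} ∏_{p ∈ D_i ∩ D_{i+1}} (1 - w̃t(p)⁻¹)`. -/
def weakSum (wt wte : ℤ × ℕ → F) (n k : ℕ) : F :=
  ∑ D ∈ weakTuples n k,
    (∏ i : Fin k, wtVal wt wte (-(n : ℤ) - 2 * (i : ℕ)) (D i)) *
      ∏ j : Fin (k - 1),
        interProd (fun p => 1 - (wte p)⁻¹) (n + 2 * (j : ℕ)) (n + 2 * ((j : ℕ) + 1))
          (D ⟨(j : ℕ), by have := j.isLt; omega⟩)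
          (D ⟨(j : ℕ) + 1, by have := j.isLt; omega⟩)

/-- The sum over `(D₁ < ⋯ < D_k) ∈ Dyck^k_{2n}` of `wt_V(D₁)⋯wt_V(D_k)`. -/
def strictSum (wt wte : ℤ × ℕ → F) (n k : ℕ) : F :=
  ∑ D ∈ strictTuples n k, ∏ i : Fin k, wtVal wt wte (-(n : ℤ) - 2 * (i : ℕ)) (D i)

end Weights

/-! ### Schröder paths.

A path with `L` steps is encoded by `st : Fin L → Fin 3`
(`0` = up-step `(1,1)`, `1` = down-step `(1,-1)`, `2` = horizontal step `(2,0)`). -/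

/-- The horizontal displacement of the `j`-th step. -/
def stepX {L : ℕ} (st : Fin L → Fin 3) (j : ℕ) : ℕ :=
  if h : j < L then (if st ⟨j, h⟩ = 2 then 2 else 1) else 0

/-- The vertical displacement of the `j`-th step. -/
def stepY {L : ℕ} (st : Fin L → Fin 3) (j : ℕ) : ℤ :=
  if h : j < L then (if st ⟨j, h⟩ = 0 then 1 else if st ⟨j, h⟩ = 1 then -1 else 0) else 0

/-- The horizontal position (relative to the start) after `j` steps. -/
def xpos {L : ℕ} (st : Fin L → Fin 3) (j : ℕ) : ℕ := ∑ t ∈ Finset.range j, stepX st t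

/-- The height after `j` steps. -/
def ypos {L : ℕ} (st : Fin L → Fin 3) (j : ℕ) : ℤ := ∑ t ∈ Finset.range j, stepY st t

/-- A (little) Schröder path of horizontal span `2m`: nonnegative heights, ends at
height `0`, and no horizontal step on the `x`-axis. -/
def IsSch (m : ℕ) {L : ℕ} (st : Fin L → Fin 3) : Prop :=
  xpos st L = 2 * m ∧ (∀ j ∈ Finset.range (L + 1), 0 ≤ ypos st j) ∧ ypos st L = 0 ∧
    ∀ j ∈ Finset.range L, stepX st j = 2 → ypos st j ≠ 0

/-- The height of a Schröder path over the relative abscissa `x` (midpoints of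
horizontal steps get the height of that horizontal step). -/
def schHeight {L : ℕ} (st : Fin L → Fin 3) (x : ℕ) : ℤ :=
  ∑ t ∈ Finset.range L, if xpos st (t + 1) ≤ x then stepY st t else 0

/-- The relative abscissa `x` is the midpoint of a horizontal step. -/
def IsHMid {L : ℕ} (st : Fin L → Fin 3) (x : ℕ) : Prop :=
  ∃ j ∈ Finset.range L, stepX st j = 2 ∧ xpos st j + 1 = x

/-- The number of horizontal steps of a Schröder path. -/
def hsCount {L : ℕ} (st : Fin L → Fin 3) : ℕ :=
  ((Finset.range L).filter fun j => stepX st j = 2).card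

/-- `wt_Sch(c, S) = c^{hs(S)} ∏_{p ∈ S} wt(p)` for a Schröder path starting at `(a,0)`. -/
def wtSch {F : Type*} [Field F] (wt : ℤ × ℕ → F) (c : F) (a : ℤ) {L : ℕ}
    (st : Fin L → Fin 3) : F :=
  c ^ hsCount st * ∏ j ∈ Finset.range (L + 1), wt (a + xpos st j, (ypos st j).toNat)

/-- `φ_V(S) = D`: the Dyck path `D` (with `L'` steps) is obtained from the Schröder
path `S` by replacing each horizontal step by a down-step followed by an up-step. -/
def PhiVEq {L L' : ℕ} (st : Fin L → Fin 3) (s : Fin L' → Bool) : Prop :=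
  ∀ x ∈ Finset.range (L' + 1),
    pht s x = schHeight st x - (if IsHMid st x then 1 else 0)

/-- `φ_HP(S) = D`: the Dyck path `D` is obtained from the Schröder path `S` by
replacing each horizontal step by an up-step followed by a down-step. -/
def PhiHPEq {L L' : ℕ} (st : Fin L → Fin 3) (s : Fin L' → Bool) : Prop :=
  ∀ x ∈ Finset.range (L' + 1),
    pht s x = schHeight st x + (if IsHMid st x then 1 else 0)

/-! ### Young diagrams, excited and pleasant diagrams, reverse plane partitions. -/

/-- The cells (1-based, matrix coordinates) of the staircase `δ_m = (m-1, m-2, …, 1)`. -/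
def deltaCells (m : ℕ) : Finset (ℕ × ℕ) :=
  ((Finset.Icc 1 m) ×ˢ (Finset.Icc 1 m)).filter fun c => c.1 + c.2 ≤ m

/-- An excited move inside the Young diagram `lam`. -/
def ExcitedStep (lam : Finset (ℕ × ℕ)) (D D' : Finset (ℕ × ℕ)) : Prop :=
  ∃ i j : ℕ, (i, j) ∈ D ∧ (i + 1, j) ∉ D ∧ (i, j + 1) ∉ D ∧ (i + 1, j + 1) ∉ D ∧
    (i + 1, j + 1) ∈ lam ∧ D' = insert (i + 1, j + 1) (D.erase (i, j))

/-- `D` is an excited diagram of `lam/mu`. -/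
def IsExcited (lam mu D : Finset (ℕ × ℕ)) : Prop :=
  Relation.ReflTransGen (ExcitedStep lam) mu D

/-- `P` is a pleasant diagram of `lam/mu`: a subset of `lam \ D` for an excited diagram `D`. -/
def IsPleasant (lam mu : Finset (ℕ × ℕ)) (P : Finset (ℕ × ℕ)) : Prop :=
  ∃ D, IsExcited lam mu D ∧ P ⊆ lam \ D

/-- `p(lam/mu)`, the number of pleasant diagrams of `lam/mu`. -/
def pleasantCount (lam mu : Finset (ℕ × ℕ)) : ℕ :=
  Set.ncard {P : Finset (ℕ × ℕ) | IsPleasant lam mu P}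

/-- A reverse plane partition on the skew shape `shape`: a filling by nonnegative
integers (vanishing off the shape) weakly increasing along rows and columns. -/
def IsRPP (shape : Finset (ℕ × ℕ)) (f : ℕ × ℕ → ℕ) : Prop :=
  (∀ c, c ∉ shape → f c = 0) ∧
    (∀ i j : ℕ, (i, j) ∈ shape → (i, j + 1) ∈ shape → f (i, j) ≤ f (i, j + 1)) ∧
    ∀ i j : ℕ, (i, j) ∈ shape → (i + 1, j) ∈ shape → f (i, j) ≤ f (i + 1, j)

/-- `∑_{π ∈ RPP(shape)} q^{|π|}` as a formal power series in `q`. -/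
def rppGF (shape : Finset (ℕ × ℕ)) : PowerSeries ℚ :=
  PowerSeries.mk fun N =>
    (Set.ncard {f : ℕ × ℕ → ℕ | IsRPP shape f ∧ ∑ c ∈ shape, f c = N} : ℚ)

/-- `(q; q)_m = ∏_{i=1}^m (1 - q^i)` as a formal power series. -/
def pochPS (m : ℕ) : PowerSeries ℚ :=
  ∏ i ∈ Finset.Icc 1 m, (1 - (PowerSeries.X : PowerSeries ℚ) ^ i)

/-- `E*_N(q) = ∑_{π ∈ Alt_N} q^{maj(κ_N π⁻¹)}` as a formal power series. -/
def EstarPS (N : ℕ) : PowerSeries ℚ :=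
  ∑ π ∈ altPerms N, (PowerSeries.X : PowerSeries ℚ) ^ majKappaInv N π

/-- `E*_m(q)/(q;q)_m` for `m ≥ 0`, and `0` for `m < 0`. -/
def EstarEntry (m : ℤ) : PowerSeries ℚ :=
  if m < 0 then 0 else EstarPS m.toNat * (pochPS m.toNat)⁻¹

/-- The Gaussian binomial coefficient `[N choose M]_q` as a formal power series. -/
def gaussPS (N M : ℕ) : PowerSeries ℚ :=
  pochPS N * (pochPS M * pochPS (N - M))⁻¹

/-!
Sorting a sequence `f 0, …, f (2 * n)` of natural numbers (Stanley's theory of `P`-partitions)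
identifies `E_{2n+1}(q) / (q; q)_{2n+1}` with `∑ q ^ (f 0 + ⋯ + f (2 * n))` over the sequences with
`f 0 ≥ f 1 < f 2 ≥ ⋯ < f (2 * n)`. Mark the first entry by `x` instead of `q`, and sum over it:
depending on the parity of the length, the generating function of such sequences satisfies
`F (N + 1) x = F N (q * x) / (1 - x)` or `F (N + 1) x = (F N q - F N (q * x)) / (1 - x)`.

The sum over Dyck paths is a power of a transfer operator. Applied to the moments of suitable
`q`-Legendre polynomials, with moment parameter `x`, this operator obeys the same two recursions:
one at odd heights and the other at even heights. At `x = q` orthogonality kills every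
even moment but the one at height `0`, so that only Dyck paths remain.

The infinite sums are taken for a real `q` in `(0, 1)`; a transcendental such `q` embeds `ℚ(q)`
into `ℝ`.
-/

section Transfer

variable {R : Type*} [CommSemiring R]

/-- The transfer operator of lattice paths with steps `±1` in `ℕ`: `(transfer W ^ L) g h` sums the
paths with `L` steps from height `h`, weighted by `W` at each point but the last and by `g` at the
last. -/
def transfer (W : ℕ → R) : (ℕ → R) →ₗ[R] (ℕ → R) where
  toFun g
    | 0 => W 0 * g 1
    | h + 1 => W (h + 1) * (g (h + 2) + g h)
  map_add' f g := by
    funext h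
    cases h <;> simp only [Pi.add_apply] <;> ring
  map_smul' a g := by
    funext h
    cases h <;> simp only [Pi.smul_apply, smul_eq_mul, RingHom.id_apply] <;> ring

variable (W : ℕ → R) (g : ℕ → R)

@[simp]
theorem transfer_apply_zero : transfer W g 0 = W 0 * g 1 := rfl

@[simp]
theorem transfer_apply_succ (h : ℕ) :
    transfer W g (h + 1) = W (h + 1) * (g (h + 2) + g h) := rfl

variable {g}

theorem transfer_pow_apply_zero_congr {g' : ℕ → R} {L : ℕ}
    (hg : ∀ h, Even (h + L) → g h = g' h) :
    (transfer W ^ L) g 0 = (transfer W ^ L) g' 0 := by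
  induction L generalizing g g' with
  | zero => exact hg 0 Even.zero
  | succ L ih =>
    simp only [pow_succ, Module.End.mul_apply]
    refine ih fun h hL => ?_
    cases h with
    | zero => simp only [transfer_apply_zero, hg 1 (by grind)]
    | succ h => simp only [transfer_apply_succ, hg (h + 2) (by grind), hg h (by grind)]

theorem stepVal_snoc_castSucc {L : ℕ} (s : Fin L → Bool) (b : Bool) {j : ℕ} (hj : j < L) :
    stepVal (Fin.snoc s b : Fin (L + 1) → Bool) j = stepVal s j := by
  have hs : (Fin.snoc s b : Fin (L + 1) → Bool) ⟨j, hj.trans L.lt_succ_self⟩ = s ⟨j, hj⟩ :=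
    Fin.snoc_castSucc (α := fun _ => Bool) b s ⟨j, hj⟩
  simp only [stepVal, hj, hj.trans L.lt_succ_self, dif_pos, hs]

theorem stepVal_snoc_last {L : ℕ} (s : Fin L → Bool) (b : Bool) :
    stepVal (Fin.snoc s b : Fin (L + 1) → Bool) L = if b then 1 else -1 := by
  have hs : (Fin.snoc s b : Fin (L + 1) → Bool) ⟨L, L.lt_succ_self⟩ = b :=
    Fin.snoc_last (α := fun _ => Bool) b s
  simp only [stepVal, L.lt_succ_self, dif_pos, hs]

theorem pht_snoc_of_le {L : ℕ} (s : Fin L → Bool) (b : Bool) {i : ℕ} (hi : i ≤ L) :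
    pht (Fin.snoc s b : Fin (L + 1) → Bool) i = pht s i :=
  sum_congr rfl fun _ hj => stepVal_snoc_castSucc s b ((mem_range.1 hj).trans_le hi)

theorem pht_snoc_last {L : ℕ} (s : Fin L → Bool) (b : Bool) :
    pht (Fin.snoc s b : Fin (L + 1) → Bool) (L + 1) = pht s L + if b then 1 else -1 := by
  rw [pht, sum_range_succ, stepVal_snoc_last, ← pht, pht_snoc_of_le s b le_rfl]

/-- The lattice paths with `L` steps that stay weakly above the `x`-axis. -/
def nonnegPaths (L : ℕ) : Finset (Fin L → Bool) :=
  univ.filter fun s => ∀ i ∈ range (L + 1), 0 ≤ pht s i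

theorem mem_nonnegPaths {L : ℕ} {s : Fin L → Bool} :
    s ∈ nonnegPaths L ↔ ∀ i ≤ L, 0 ≤ pht s i := by
  simp [nonnegPaths]

theorem snoc_mem_nonnegPaths {L : ℕ} {s : Fin L → Bool} {b : Bool} :
    (Fin.snoc s b : Fin (L + 1) → Bool) ∈ nonnegPaths (L + 1) ↔
      s ∈ nonnegPaths L ∧ 0 ≤ pht s L + if b then 1 else -1 := by
  simp only [mem_nonnegPaths, Nat.le_succ_iff, or_imp, forall_and, forall_eq, pht_snoc_last]
  exact and_congr_left fun _ => forall₂_congr fun i hi => by rw [pht_snoc_of_le s b hi]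

variable (g)

theorem weight_mul_sum_step {L : ℕ} {s : Fin L → Bool} (hs : s ∈ nonnegPaths L) :
    W (pht s L).toNat * ∑ b : Bool, (if 0 ≤ pht s L + (if b then 1 else -1) then
      g (pht s L + if b then 1 else -1).toNat else 0) = transfer W g (pht s L).toNat := by
  have h0 : 0 ≤ pht s L := mem_nonnegPaths.1 hs L le_rfl
  generalize pht s L = a at h0
  lift a to ℕ using h0
  have up : 0 ≤ (a : ℤ) + 1 ∧ ((a : ℤ) + 1).toNat = a + 1 := by omega
  cases a with
  | zero => simp
  | succ h =>
    have down : 0 ≤ ((h + 1 : ℕ) : ℤ) + -1 ∧ (((h + 1 : ℕ) : ℤ) + -1).toNat = h := by omega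
    simp only [Fintype.sum_bool, if_true, Bool.false_eq_true, if_false, up, down,
      Int.toNat_natCast, transfer_apply_succ]

theorem sum_nonnegPaths (L : ℕ) :
    ∑ s ∈ nonnegPaths L, (∏ i ∈ range L, W (pht s i).toNat) * g (pht s L).toNat =
      (transfer W ^ L) g 0 := by
  induction L generalizing g with
  | zero => simp [nonnegPaths, pht]
  | succ L ih =>
    rw [pow_succ, Module.End.mul_apply, ← ih, ← Fintype.sum_ite_mem (nonnegPaths (L + 1)),
      ← Fintype.sum_ite_mem (nonnegPaths L),
      ← (Fin.snocEquiv fun _ => Bool).sum_comp, Fintype.sum_prod_type_right]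
    refine sum_congr rfl fun s _ => ?_
    have hsnoc (b : Bool) : Fin.snocEquiv (fun _ => Bool) (b, s) = Fin.snoc s b := rfl
    by_cases hs : s ∈ nonnegPaths L
    · have hprod (b : Bool) : ∏ i ∈ range L,
          W (pht (Fin.snoc s b : Fin (L + 1) → Bool) i).toNat = ∏ i ∈ range L, W (pht s i).toNat :=
        prod_congr rfl fun i hi => by rw [pht_snoc_of_le s b (mem_range.1 hi).le]
      simp only [hsnoc, snoc_mem_nonnegPaths, hs, true_and, if_true,
        prod_range_succ, hprod, pht_snoc_of_le s _ le_rfl, pht_snoc_last]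
      rw [← weight_mul_sum_step W g hs, ← mul_assoc, mul_sum]
      simp only [mul_ite, mul_zero]
    · simp [hsnoc, snoc_mem_nonnegPaths, hs]

theorem sum_dyckPaths (L : ℕ) :
    ∑ s ∈ dyckPaths L, ∏ i ∈ range (L + 1), W (pht s i).toNat =
      (transfer W ^ L) (Pi.single 0 (W 0)) 0 := by
  have hdyck : dyckPaths L = (nonnegPaths L).filter fun s => pht s L = 0 := by
    ext s
    simp [dyckPaths, nonnegPaths, IsDyck]
  rw [hdyck, sum_filter, ← sum_nonnegPaths]
  refine sum_congr rfl fun s hs => ?_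
  have h0 : (pht s L).toNat = 0 ↔ pht s L = 0 := by
    have := mem_nonnegPaths.1 hs L le_rfl
    omega
  split_ifs with h
  · rw [prod_range_succ, h, Int.toNat_zero, Pi.single_eq_same]
  · rw [Pi.single_eq_of_ne (mt h0.1 h), mul_zero]

end Transfer

section Moments

variable {K : Type*} [Field K]

/-- The weight of a lattice point at height `h` of a Dyck path. -/
def heightWeight (q : K) (h : ℕ) : K := q ^ h / (1 - q ^ (2 * h + 1))

/-- For `x = q ^ c` this is the moment `∑ a, x ^ a * P h (q ^ a)` of a rescaled
`q`-Legendre polynomial `P h` of degree `h`, where `P 0 = 1`, `P 1 y = q * y` and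
`P 2 y ∝ 1 - (1 + q + q ^ 2) * y ^ 2`. The two summations `p ↦ ∑ b > a, q ^ b * p (q ^ b)` (for
even `h`) and `p ↦ ∑ b ≤ a, q ^ b * p (q ^ b)` (for odd `h`) act on these polynomials as the
transfer operator of Dyck paths; the product formula solves the resulting recursion. -/
def legendreMoment (q x : K) : ℕ → K
  | 0 => 1 / (1 - x)
  | 1 => q / (1 - q * x)
  | h + 2 => legendreMoment q x h * (q ^ (h + 2) * (x - q ^ (h + 1)) / (1 - q ^ (h + 2) * x))

variable {q x : K}

theorem heightWeight_mul_legendreMoment_add {h : ℕ} (hq : 1 - q ^ (2 * (h + 1) + 1) ≠ 0)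
    (hx : 1 - q ^ (h + 2) * x ≠ 0) :
    heightWeight q (h + 1) * (legendreMoment q x (h + 2) + legendreMoment q x h) =
      q ^ (h + 1) / (1 - q ^ (h + 2) * x) * legendreMoment q x h := by
  rw [legendreMoment, heightWeight]
  field_simp
  ring

theorem legendreMoment_succ_mul (hx : ∀ k, 1 - q ^ k * x ≠ 0) (h : ℕ) :
    legendreMoment q (q * x) (h + 1) =
      (-1) ^ h * q ^ (h + 1) * (1 - x) / (1 - q ^ (h + 2) * x) * legendreMoment q x h := by
  induction h using Nat.twoStepInduction with
  | zero =>
    have h0 : 1 - x ≠ 0 := by simpa using hx 0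
    simp only [legendreMoment]
    field_simp
    ring
  | one =>
    have h1 : 1 - q * x ≠ 0 := by simpa using hx 1
    simp only [legendreMoment]
    field_simp
    ring
  | more h ih _ =>
    rw [legendreMoment, ih, legendreMoment]
    rw [show 1 - q ^ (h + 1 + 2) * (q * x) = 1 - q ^ (h + 4) * x by ring,
      show h + 2 + 2 = h + 4 by ring]
    field_simp
    ring

theorem transfer_legendreMoment_zero (hq : 1 - q ≠ 0) (hx : 1 - x ≠ 0) (hqx : 1 - q * x ≠ 0) :
    transfer (heightWeight q) (legendreMoment q x) 0 =
      (legendreMoment q q 0 - legendreMoment q (q * x) 0) / (1 - x) := by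
  simp only [transfer_apply_zero, heightWeight, legendreMoment, pow_zero, mul_zero, zero_add,
    pow_one]
  field_simp
  ring

theorem transfer_legendreMoment_succ (hq : ∀ k, 1 - q ^ (k + 1) ≠ 0)
    (hx : ∀ k, 1 - q ^ k * x ≠ 0) (h : ℕ) :
    transfer (heightWeight q) (legendreMoment q x) (h + 1) =
      (-1) ^ h * legendreMoment q (q * x) (h + 1) / (1 - x) := by
  have h0 : 1 - x ≠ 0 := by simpa using hx 0
  have hsq : ((-1 : K) ^ h) * (-1) ^ h = 1 := by rw [← mul_pow]; simp
  rw [transfer_apply_succ, heightWeight_mul_legendreMoment_add (hq _) (hx _),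
    legendreMoment_succ_mul hx, eq_div_iff h0]
  linear_combination (-(q ^ (h + 1) * (1 - x) / (1 - q ^ (h + 2) * x)) * legendreMoment q x h) * hsq

theorem legendreMoment_self_add_two (q : K) {h : ℕ} (hh : Even h) :
    legendreMoment q q (h + 2) = 0 := by
  obtain ⟨b, rfl⟩ := hh.two_dvd
  clear hh
  induction b with
  | zero => simp [legendreMoment]
  | succ b ih => rw [mul_add, mul_one, legendreMoment, ih, zero_mul]

theorem transfer_legendreMoment_of_odd (hq : ∀ k, 1 - q ^ (k + 1) ≠ 0)
    (hx : ∀ k, 1 - q ^ k * x ≠ 0) {h : ℕ} (hh : Odd h) :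
    transfer (heightWeight q) (legendreMoment q x) h = legendreMoment q (q * x) h / (1 - x) := by
  obtain ⟨b, rfl⟩ := hh
  rw [transfer_legendreMoment_succ hq hx, (even_two_mul b).neg_one_pow, one_mul]

theorem transfer_legendreMoment_of_even (hq : ∀ k, 1 - q ^ (k + 1) ≠ 0)
    (hx : ∀ k, 1 - q ^ k * x ≠ 0) {h : ℕ} (hh : Even h) :
    transfer (heightWeight q) (legendreMoment q x) h =
      (legendreMoment q q h - legendreMoment q (q * x) h) / (1 - x) := by
  match h with
  | 0 =>
    exact transfer_legendreMoment_zero (by simpa using hq 0) (by simpa using hx 0)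
      (by simpa using hx 1)
  | 1 => exact absurd hh Nat.not_even_one
  | h + 2 =>
    have hh' : Even h := by simpa [Nat.even_add] using hh
    rw [transfer_legendreMoment_succ hq hx, legendreMoment_self_add_two q hh',
      hh'.add_one.neg_one_pow]
    ring

/-- The sum of the weighted nonnegative paths with `L` steps from the origin whose last point, at
height `h`, is weighted by `legendreMoment q x h`. -/
def pathMoment (q x : K) (L : ℕ) : K :=
  (transfer (heightWeight q) ^ L) (legendreMoment q x) 0

theorem pathMoment_zero (q x : K) : pathMoment q x 0 = (1 - x)⁻¹ := one_div _

theorem pathMoment_succ_of_odd (hq : ∀ k, 1 - q ^ (k + 1) ≠ 0) (hx : ∀ k, 1 - q ^ k * x ≠ 0)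
    {L : ℕ} (hL : Odd L) : pathMoment q x (L + 1) = (1 - x)⁻¹ * pathMoment q (q * x) L := by
  have hstep : ∀ h, Even (h + L) → transfer (heightWeight q) (legendreMoment q x) h =
      ((1 - x)⁻¹ • legendreMoment q (q * x)) h := fun h hh => by
    rw [transfer_legendreMoment_of_odd hq hx (by grind), div_eq_inv_mul]; rfl
  rw [pathMoment, pow_succ, Module.End.mul_apply, transfer_pow_apply_zero_congr _ hstep, map_smul]
  rfl

theorem pathMoment_succ_of_even (hq : ∀ k, 1 - q ^ (k + 1) ≠ 0) (hx : ∀ k, 1 - q ^ k * x ≠ 0)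
    {L : ℕ} (hL : Even L) :
    pathMoment q x (L + 1) = (1 - x)⁻¹ * (pathMoment q q L - pathMoment q (q * x) L) := by
  have hstep : ∀ h, Even (h + L) → transfer (heightWeight q) (legendreMoment q x) h =
      ((1 - x)⁻¹ • (legendreMoment q q - legendreMoment q (q * x))) h := fun h hh => by
    rw [transfer_legendreMoment_of_even hq hx (by grind), div_eq_inv_mul]; rfl
  rw [pathMoment, pow_succ, Module.End.mul_apply, transfer_pow_apply_zero_congr _ hstep, map_smul,
    map_sub]
  rfl

theorem pathMoment_self_of_even (q : K) {L : ℕ} (hL : Even L) :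
    pathMoment q q L =
      ∑ s ∈ dyckPaths L, ∏ i ∈ range (L + 1), heightWeight q (pht s i).toNat := by
  rw [sum_dyckPaths, pathMoment]
  refine transfer_pow_apply_zero_congr _ fun h hh => ?_
  match h with
  | 0 => simp [legendreMoment, heightWeight]
  | 1 => exact absurd hh (by grind)
  | h + 2 => exact (legendreMoment_self_add_two q (by grind)).trans (by simp)

end Moments

section ChainSums

open scoped ENNReal

variable {N : ℕ}

/-- Consecutive entries of `f` are related by the relations `r 0, r 1, …`. -/
def Chain (r : Fin N → ℕ → ℕ → Prop) (f : Fin (N + 1) → ℕ) : Prop :=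
  ∀ k : Fin N, r k (f k.castSucc) (f k.succ)

theorem chain_cons {r : Fin (N + 1) → ℕ → ℕ → Prop} {a : ℕ} {g : Fin (N + 1) → ℕ} :
    Chain r (Fin.cons a g : Fin (N + 2) → ℕ) ↔ r 0 a (g 0) ∧ Chain (fun k => r k.succ) g := by
  simp only [Chain, Fin.forall_fin_succ (n := N), Fin.castSucc_zero, ← Fin.succ_castSucc,
    Fin.cons_zero, Fin.cons_succ]

/-- The generating function of the chains `f` by the sum of their entries, marked by `q`, except
for the first entry, which is marked by `x`. -/
def chainSum (q x : ℝ≥0∞) (r : Fin N → ℕ → ℕ → Prop) : ℝ≥0∞ :=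
  ∑' f : Fin (N + 1) → ℕ, if Chain r f then x ^ f 0 * q ^ ∑ i : Fin N, f i.succ else 0

theorem chainSum_zero (q x : ℝ≥0∞) (r : Fin 0 → ℕ → ℕ → Prop) : chainSum q x r = (1 - x)⁻¹ := by
  rw [chainSum, ← ENNReal.tsum_geometric, ← (Equiv.funUnique (Fin 1) ℕ).symm.tsum_eq]
  simp [Chain]

theorem chainSum_succ (q x : ℝ≥0∞) (r : Fin (N + 1) → ℕ → ℕ → Prop) :
    chainSum q x r = ∑' g : Fin (N + 1) → ℕ,
      if Chain (fun k => r k.succ) g then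
        q ^ (∑ i, g i) * ∑' a, if r 0 a (g 0) then x ^ a else 0
      else 0 := by
  rw [chainSum, ← (Fin.consEquiv fun _ : Fin (N + 2) => ℕ).tsum_eq, ENNReal.tsum_prod',
    ENNReal.tsum_comm]
  refine tsum_congr fun g => ?_
  have hcons (a : ℕ) : Fin.consEquiv (fun _ : Fin (N + 2) => ℕ) (a, g) = Fin.cons a g := rfl
  simp only [hcons, chain_cons, Fin.cons_zero, Fin.cons_succ, and_comm (b := Chain _ g), ite_and]
  split_ifs
  · rw [mul_comm, ← ENNReal.tsum_mul_right]
    simp only [ite_mul, zero_mul]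
  · exact tsum_zero

theorem tsum_ite_le_pow (x : ℝ≥0∞) (m : ℕ) :
    ∑' a : ℕ, (if m ≤ a then x ^ a else 0) = x ^ m * (1 - x)⁻¹ := by
  rw [← ENNReal.tsum_geometric, ← ENNReal.tsum_mul_left,
    ← (add_right_injective m).tsum_eq (f := fun a => if m ≤ a then x ^ a else 0)]
  · exact tsum_congr fun a => by simp [pow_add]
  · intro a ha
    have hma : m ≤ a := by
      by_contra h
      simp [h] at ha
    exact ⟨a - m, Nat.add_sub_of_le hma⟩

theorem tsum_ite_lt_pow_add (x : ℝ≥0∞) (m : ℕ) :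
    ∑' a : ℕ, (if a < m then x ^ a else 0) + x ^ m * (1 - x)⁻¹ = (1 - x)⁻¹ := by
  rw [← tsum_ite_le_pow, ← ENNReal.tsum_add, ← ENNReal.tsum_geometric]
  refine tsum_congr fun a => ?_
  by_cases h : a < m
  · simp [h, not_le.2 h]
  · simp [h, not_lt.1 h]

theorem chainSum_succ_le (q x : ℝ≥0∞) (r : Fin (N + 1) → ℕ → ℕ → Prop) :
    chainSum q x r ≤ (1 - x)⁻¹ * chainSum q q fun k => r k.succ := by
  rw [chainSum_succ, chainSum, ← ENNReal.tsum_mul_left]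
  refine ENNReal.tsum_le_tsum fun g => ?_
  split_ifs
  · rw [Fin.sum_univ_succ, pow_add, mul_comm, ← ENNReal.tsum_geometric]
    gcongr
    split_ifs <;> simp
  · simp

theorem chainSum_ne_top {q x : ℝ≥0∞} (hq : q < 1) (hx : x < 1) (r : Fin N → ℕ → ℕ → Prop) :
    chainSum q x r ≠ ∞ := by
  have hinv {y : ℝ≥0∞} (hy : y < 1) : (1 - y)⁻¹ ≠ ∞ :=
    ENNReal.inv_ne_top.2 (tsub_pos_of_lt hy).ne'
  induction N generalizing x with
  | zero => exact chainSum_zero q x r ▸ hinv hx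
  | succ N ih =>
    exact ne_top_of_le_ne_top (ENNReal.mul_ne_top (hinv hx) (ih hq _)) (chainSum_succ_le q x r)

theorem chainSum_succ_of_le (q x : ℝ≥0∞) {r : Fin (N + 1) → ℕ → ℕ → Prop} {s : ℕ}
    (hr : ∀ a b, r 0 a b ↔ b + s ≤ a) :
    chainSum q x r = x ^ s * (1 - x)⁻¹ * chainSum q (q * x) fun k => r k.succ := by
  rw [chainSum_succ, chainSum, ← ENNReal.tsum_mul_left]
  refine tsum_congr fun g => ?_
  simp only [hr, tsum_ite_le_pow, mul_ite, mul_zero, Fin.sum_univ_succ]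
  refine if_congr Iff.rfl ?_ rfl
  ring

theorem chainSum_succ_of_lt (q x : ℝ≥0∞) {r : Fin (N + 1) → ℕ → ℕ → Prop}
    (hr : ∀ a b, r 0 a b ↔ a < b) :
    chainSum q x r + (1 - x)⁻¹ * chainSum q (q * x) (fun k => r k.succ) =
      (1 - x)⁻¹ * chainSum q q fun k => r k.succ := by
  rw [chainSum_succ, chainSum, chainSum, ← ENNReal.tsum_mul_left, ← ENNReal.tsum_mul_left,
    ← ENNReal.tsum_add]
  refine tsum_congr fun g => ?_
  split_ifs
  · simp only [hr, Fin.sum_univ_succ]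
    conv_rhs => rw [← tsum_ite_lt_pow_add x (g 0)]
    ring
  · simp

theorem chainSum_of_add_le (q x : ℝ≥0∞) (s : Fin N → ℕ) :
    chainSum q x (fun k a b => b + s k ≤ a) =
      (∏ k : Fin N, (q ^ (k : ℕ) * x) ^ s k) * ∏ k : Fin (N + 1), (1 - q ^ (k : ℕ) * x)⁻¹ := by
  induction N generalizing x with
  | zero => simp [chainSum_zero]
  | succ N ih =>
    rw [chainSum_succ_of_le (s := s 0) q x fun _ _ => Iff.rfl, ih (q * x) fun k => s k.succ,
      Fin.prod_univ_succ fun k : Fin (N + 1) => (q ^ (k : ℕ) * x) ^ s k,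
      Fin.prod_univ_succ (n := N + 1)]
    simp only [Fin.val_zero, Fin.val_succ, pow_zero, one_mul, pow_succ, mul_assoc]
    ring

/-- The relations of a chain `⋯ ≥ f (N - 3) < f (N - 2) ≥ f (N - 1) < f N`. Counting from the end
makes the tail of a zigzag chain a zigzag chain. -/
def zigzag (N : ℕ) (k : Fin N) (a b : ℕ) : Prop := a < b ↔ Odd (N - k : ℕ)

theorem zigzag_succ (N : ℕ) : (fun k : Fin N => zigzag (N + 1) k.succ) = zigzag N := by
  simp [funext_iff, zigzag]

theorem toReal_inv_one_sub_ofReal {x : ℝ} (hx : 0 ≤ x) (hx1 : x ≤ 1) :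
    ((1 - ENNReal.ofReal x)⁻¹).toReal = (1 - x)⁻¹ := by
  rw [← ENNReal.ofReal_one, ← ENNReal.ofReal_sub _ hx, ENNReal.toReal_inv,
    ENNReal.toReal_ofReal (sub_nonneg.2 hx1)]

theorem toReal_chainSum_succ_of_lt {q x : ℝ} (hq : 0 ≤ q) (hq1 : q < 1) (hx : 0 ≤ x) (hx1 : x < 1)
    {r : Fin (N + 1) → ℕ → ℕ → Prop} (hr : ∀ a b, r 0 a b ↔ a < b) :
    (chainSum (ENNReal.ofReal q) (ENNReal.ofReal x) r).toReal =
      (1 - x)⁻¹ * ((chainSum (ENNReal.ofReal q) (ENNReal.ofReal q) fun k => r k.succ).toReal -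
        (chainSum (ENNReal.ofReal q) (ENNReal.ofReal (q * x)) fun k => r k.succ).toReal) := by
  have hq1' : ENNReal.ofReal q < 1 := ENNReal.ofReal_lt_one.2 hq1
  have hx1' : ENNReal.ofReal x < 1 := ENNReal.ofReal_lt_one.2 hx1
  have hrest : (1 - ENNReal.ofReal x)⁻¹ *
      chainSum (ENNReal.ofReal q) (ENNReal.ofReal q * ENNReal.ofReal x) (fun k => r k.succ) ≠ ∞ :=
    ENNReal.mul_ne_top (ENNReal.inv_ne_top.2 (tsub_pos_of_lt hx1').ne')
      (chainSum_ne_top hq1' (mul_lt_one_of_lt_of_le hq1' hx1'.le) _)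
  have h := congrArg ENNReal.toReal (chainSum_succ_of_lt (ENNReal.ofReal q) (ENNReal.ofReal x) hr)
  rw [ENNReal.toReal_add (chainSum_ne_top hq1' hx1' r) hrest, ENNReal.toReal_mul,
    ENNReal.toReal_mul, toReal_inv_one_sub_ofReal hx hx1.le, ← ENNReal.ofReal_mul hq] at h
  rw [mul_sub, ← h, add_sub_cancel_right]

theorem toReal_chainSum_zigzag {q x : ℝ} (hq : 0 ≤ q) (hq1 : q < 1) (hx : 0 ≤ x) (hx1 : x < 1)
    (N : ℕ) :
    (chainSum (ENNReal.ofReal q) (ENNReal.ofReal x) (zigzag N)).toReal = pathMoment q x N := by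
  induction N generalizing x with
  | zero => rw [chainSum_zero, toReal_inv_one_sub_ofReal hx hx1.le, pathMoment_zero]
  | succ N ih =>
    have hqx : 0 ≤ q * x := mul_nonneg hq hx
    have hqx1 : q * x < 1 := mul_lt_one_of_nonneg_of_lt_one_left hq hq1 hx1.le
    have hq' (k : ℕ) : 1 - q ^ (k + 1) ≠ 0 :=
      (sub_pos.2 (pow_lt_one₀ hq hq1 k.succ_ne_zero)).ne'
    have hx' (k : ℕ) : 1 - q ^ k * x ≠ 0 :=
      (sub_pos.2 (mul_lt_one_of_nonneg_of_lt_one_right (pow_le_one₀ hq hq1.le) hx hx1)).ne'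
    rcases N.even_or_odd with hN | hN
    · have hlt (a b : ℕ) : zigzag (N + 1) 0 a b ↔ a < b := by simp [zigzag, hN.add_one]
      rw [toReal_chainSum_succ_of_lt hq hq1 hx hx1 hlt, zigzag_succ, ih hq hq1, ih hqx hqx1,
        pathMoment_succ_of_even hq' hx' hN]
    · have hle (a b : ℕ) : zigzag (N + 1) 0 a b ↔ b + 0 ≤ a := by
        simp [zigzag, Nat.not_odd_iff_even.2 hN.add_one]
      rw [chainSum_succ_of_le _ _ hle, zigzag_succ, pow_zero, one_mul, ← ENNReal.ofReal_mul hq,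
        ENNReal.toReal_mul, toReal_inv_one_sub_ofReal hx hx1.le, ih hqx hqx1,
        pathMoment_succ_of_odd hq' hx' hN]

end ChainSums

section Standardization

open scoped ENNReal

variable {N : ℕ}

theorem word_succ (π : Equiv.Perm (Fin N)) (k : Fin N) : word π (k + 1) = π k + 1 := by
  rw [word, dif_pos ⟨Nat.le_add_left 1 k, k.isLt⟩]
  rfl

/-- The indicator of a descent of `σ` between the adjacent positions `k` and `k + 1`. -/
def descent (σ : Equiv.Perm (Fin (N + 1))) (k : Fin N) : ℕ :=
  if σ k.succ < σ k.castSucc then 1 else 0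

theorem majW_word (σ : Equiv.Perm (Fin (N + 1))) :
    majW (N + 1) (word σ) = ∑ k : Fin N, (k + 1) * descent σ k := by
  rw [majW, Nat.add_sub_cancel, ← Ico_add_one_right_eq_Icc, sum_Ico_eq_sum_range,
    Nat.add_sub_cancel, ← Fin.sum_univ_eq_sum_range
      fun k => if word σ (1 + k + 1) < word σ (1 + k) then 1 + k else 0]
  refine sum_congr rfl fun k _ => ?_
  have h0 := word_succ σ k.castSucc
  have h1 := word_succ σ k.succ
  simp only [Fin.val_castSucc, Fin.val_succ] at h0 h1
  simp only [add_comm 1 (k : ℕ), h0, h1, descent, add_lt_add_iff_right, Fin.val_fin_lt, mul_ite,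
    mul_one, mul_zero]

theorem mem_altPerms_iff {π : Equiv.Perm (Fin (N + 1))} :
    π ∈ altPerms (N + 1) ↔ ∀ k : Fin N, π k.succ < π k.castSucc ↔ Odd (k : ℕ) := by
  have hne (k : Fin N) : π k.succ ≠ π k.castSucc := π.injective.ne Fin.castSucc_lt_succ.ne'
  have hword (k : Fin N) : word π (k + 1) = π k.castSucc + 1 ∧
      word π (k + 1 + 1) = π k.succ + 1 := ⟨word_succ π k.castSucc, word_succ π k.succ⟩
  have hIcc (p : ℕ → Prop) : (∀ i ∈ Icc 1 (N + 1 - 1), p i) ↔ ∀ k : Fin N, p (k + 1) := by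
    refine ⟨fun h k => h _ (by simp), fun h i hi => ?_⟩
    obtain ⟨hi1, hiN⟩ := mem_Icc.1 hi
    simpa [Nat.sub_add_cancel hi1] using h ⟨i - 1, by omega⟩
  simp only [altPerms, mem_filter, mem_univ, true_and, IsAltW, hIcc]
  refine forall_congr' fun k => ?_
  rw [(hword k).1, (hword k).2, Fin.lt_def, Nat.odd_iff]
  have := Fin.val_ne_of_ne (hne k)
  omega

/-- The permutation that lists the positions of `f` by weakly decreasing entry, equal entries
being listed from left to right. -/
def sortDesc (f : Fin N → ℕ) : Equiv.Perm (Fin N) :=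
  Tuple.sort (OrderDual.toDual ∘ f)

theorem sortDesc_eq_iff_strictMono {f : Fin N → ℕ} {σ : Equiv.Perm (Fin N)} :
    sortDesc f = σ ↔ StrictMono fun i => toLex (OrderDual.toDual (f (σ i)), σ i) := by
  rw [sortDesc, eq_comm, Tuple.eq_sort_iff']
  rfl

theorem sortDesc_eq_iff_chain {f : Fin (N + 1) → ℕ} {σ : Equiv.Perm (Fin (N + 1))} :
    sortDesc f = σ ↔ Chain (fun k a b => b + descent σ k ≤ a) (f ∘ σ) := by
  rw [sortDesc_eq_iff_strictMono, Fin.strictMono_iff_lt_succ]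
  refine forall_congr' fun k => ?_
  have hne : σ k.succ ≠ σ k.castSucc := σ.injective.ne Fin.castSucc_lt_succ.ne'
  simp only [Prod.Lex.toLex_lt_toLex, OrderDual.toDual_lt_toDual, OrderDual.toDual_inj, descent,
    Function.comp_apply]
  split_ifs with h
  · simp only [h.not_gt, and_false, or_false, Nat.lt_iff_add_one_le]
  · simp [lt_of_le_of_ne (not_lt.1 h) hne.symm, le_iff_lt_or_eq, eq_comm]

theorem sortDesc_symm_lt_iff (f : Fin N → ℕ) {i j : Fin N} (hij : i < j) :
    (sortDesc f).symm j < (sortDesc f).symm i ↔ f i < f j := by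
  rw [← (sortDesc_eq_iff_strictMono.1 (rfl : sortDesc f = sortDesc f)).lt_iff_lt]
  simp [Prod.Lex.toLex_lt_toLex, hij.not_gt]

theorem sortDesc_symm_mem_altPerms_iff (n : ℕ) (f : Fin (2 * n + 1) → ℕ) :
    (sortDesc f).symm ∈ altPerms (2 * n + 1) ↔ Chain (zigzag (2 * n)) f := by
  rw [mem_altPerms_iff]
  refine forall_congr' fun k => ?_
  have hparity : Odd (2 * n - k : ℕ) ↔ Odd (k : ℕ) := by
    rw [Nat.odd_sub' k.isLt.le, iff_true_right (even_two_mul n)]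
  rw [sortDesc_symm_lt_iff f Fin.castSucc_lt_succ, zigzag, hparity]

theorem tsum_sortDesc_eq (q : ℝ≥0∞) (σ : Equiv.Perm (Fin (N + 1))) :
    ∑' f : Fin (N + 1) → ℕ, (if sortDesc f = σ then q ^ ∑ i, f i else 0) =
      q ^ majW (N + 1) (word σ) * ∏ i ∈ Icc 1 (N + 1), (1 - q ^ i)⁻¹ := by
  have hchain : ∑' f : Fin (N + 1) → ℕ, (if sortDesc f = σ then q ^ ∑ i, f i else 0) =
      chainSum q q fun k a b => b + descent σ k ≤ a := by
    rw [chainSum, ← (σ.arrowCongr (Equiv.refl ℕ)).tsum_eq]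
    refine tsum_congr fun g => ?_
    have hcomp : σ.arrowCongr (Equiv.refl ℕ) g ∘ σ = g := by
      ext
      simp [Equiv.arrowCongr]
    have hsum : ∑ i, σ.arrowCongr (Equiv.refl ℕ) g i = ∑ i, g i := Equiv.sum_comp σ.symm g
    simp only [sortDesc_eq_iff_chain, hcomp, hsum, ← pow_add, ← Fin.sum_univ_succ]
  rw [hchain, chainSum_of_add_le, majW_word, ← prod_pow_eq_pow_sum, ← Ico_add_one_right_eq_Icc,
    prod_Ico_eq_prod_range, Nat.add_sub_cancel, ← Fin.prod_univ_eq_prod_range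
      fun k => (1 - q ^ (1 + k))⁻¹]
  simp only [← pow_succ, pow_mul, add_comm 1]

theorem tsum_sortDesc_symm_mem (q : ℝ≥0∞) (S : Finset (Equiv.Perm (Fin (N + 1)))) :
    ∑' f : Fin (N + 1) → ℕ, (if (sortDesc f).symm ∈ S then q ^ ∑ i, f i else 0) =
      (∑ π ∈ S, q ^ majInv (N + 1) π) * ∏ i ∈ Icc 1 (N + 1), (1 - q ^ i)⁻¹ := by
  have hfiber (f : Fin (N + 1) → ℕ) :
      (if (sortDesc f).symm ∈ S then q ^ ∑ i, f i else 0) =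
        ∑ π ∈ S, if sortDesc f = π.symm then q ^ ∑ i, f i else 0 := by
    have hsymm (π : Equiv.Perm (Fin (N + 1))) : sortDesc f = π.symm ↔ (sortDesc f).symm = π :=
      ⟨fun h => by rw [h, Equiv.symm_symm], fun h => by rw [← h, Equiv.symm_symm]⟩
    simp only [hsymm, sum_ite_eq]
  rw [tsum_congr hfiber, Summable.tsum_finsetSum fun _ _ => ENNReal.summable, sum_mul]
  exact sum_congr rfl fun π _ => tsum_sortDesc_eq q π.symm

theorem chainSum_zigzag_eq_sum_altPerms (q : ℝ≥0∞) (n : ℕ) :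
    chainSum q q (zigzag (2 * n)) =
      (∑ π ∈ altPerms (2 * n + 1), q ^ majInv (2 * n + 1) π) *
        ∏ i ∈ Icc 1 (2 * n + 1), (1 - q ^ i)⁻¹ := by
  simp only [← tsum_sortDesc_symm_mem, sortDesc_symm_mem_altPerms_iff, chainSum, ← pow_add,
    ← Fin.sum_univ_succ]

end Standardization

theorem sum_altPerms_eq_sum_dyckPaths {q : ℝ} (hq : 0 ≤ q) (hq1 : q < 1) (n : ℕ) :
    (∑ π ∈ altPerms (2 * n + 1), q ^ majInv (2 * n + 1) π) /
        ∏ i ∈ Icc 1 (2 * n + 1), (1 - q ^ i) =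
      ∑ s ∈ dyckPaths (2 * n), ∏ i ∈ range (2 * n + 1),
        q ^ pht s i / (1 - q ^ (2 * pht s i + 1)) := by
  have hinv (i : ℕ) : ((1 - ENNReal.ofReal q ^ i)⁻¹).toReal = (1 - q ^ i)⁻¹ := by
    rw [← ENNReal.ofReal_pow hq,
      toReal_inv_one_sub_ofReal (pow_nonneg hq i) (pow_le_one₀ hq hq1.le)]
  have hlhs := congrArg ENNReal.toReal (chainSum_zigzag_eq_sum_altPerms (ENNReal.ofReal q) n)
  rw [ENNReal.toReal_mul, ENNReal.toReal_prod,
    ENNReal.toReal_sum fun _ _ => ENNReal.pow_ne_top ENNReal.ofReal_ne_top] at hlhs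
  simp only [ENNReal.toReal_pow, ENNReal.toReal_ofReal hq, hinv, prod_inv_distrib] at hlhs
  rw [div_eq_mul_inv, ← hlhs, toReal_chainSum_zigzag hq hq1 hq hq1,
    pathMoment_self_of_even q (even_two_mul n)]
  refine sum_congr rfl fun s hs => prod_congr rfl fun i hi => ?_
  have hpos : 0 ≤ pht s i := (mem_filter.1 hs).2.1 i hi
  lift pht s i to ℕ using hpos with h
  rw [Int.toNat_natCast, heightWeight]
  norm_cast

theorem exists_transcendental_mem_Ioo {a b : ℝ} (hab : a < b) :
    ∃ q ∈ Set.Ioo a b, Transcendental ℚ q := by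
  obtain ⟨q, hq, hqab⟩ := ((Algebraic.countable ℚ ℝ).dense_compl ℝ).exists_between hab
  exact ⟨q, hqab, hq⟩

theorem exists_ratFunc_ringHom_of_transcendental {K L : Type*} [Field K] [Field L] [Algebra K L]
    {q : L} (hq : Transcendental K q) : ∃ φ : RatFunc K →+* L, φ RatFunc.X = q :=
  ⟨(algebraMap _ L).comp (RatFunc.algEquivOfTranscendental q hq).toRingEquiv.toRingHom, by simp⟩

theorem statement_0 (n : ℕ) :
    (∑ π ∈ altPerms (2 * n + 1), (RatFunc.X : RatFunc ℚ) ^ majInv (2 * n + 1) π) /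
        ∏ i ∈ Finset.Icc 1 (2 * n + 1), (1 - (RatFunc.X : RatFunc ℚ) ^ i) =
      ∑ s ∈ dyckPaths (2 * n), ∏ i ∈ Finset.range (2 * n + 1),
        (RatFunc.X : RatFunc ℚ) ^ pht s i /
          (1 - (RatFunc.X : RatFunc ℚ) ^ (2 * pht s i + 1)) := by
  obtain ⟨q, ⟨hq, hq1⟩, htr⟩ := exists_transcendental_mem_Ioo (zero_lt_one' ℝ)
  obtain ⟨φ, hX⟩ := exists_ratFunc_ringHom_of_transcendental htr
  apply φ.injective
  simpa [hX] using sum_altPerms_eq_sum_dyckPaths hq.le hq1 n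

end Paper
end
end

section
/- For every nonnegative integer n, the identity Σ_{D∈Dyck_{2n}} q^{H(D)} Π_{(a,b)∈D} 1/(1−q^{2b+1}) = (1/(1−q)) Σ_{D∈Dyck_{2n}} wt_w(D) holds in ℚ(q), where wt_w(D) = Π_{i≥0} w_i^{m_i(D)}, m_i(D) is the number of up steps of D going from height i to height i+1, and w_i = q^i/((1−q^{2i+1})(1−q^{2i+3})) if i is even and w_i = q^{3i+2}/((1−q^{2i+1})(1−q^{2i+3})) if i is odd. -/
open Finset

attribute [local instance 10] Classical.propDecidable

noncomputable section

namespace Paper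

/-!
Reading a path from its first step gives a linear system for the generating functions
`W_h(z) = ∑ z ^ L · (weighted paths with L steps from height h down to 0)`, and any family of power
series satisfying this system up to a factor `β` in its initial condition equals `β W_h`.
The solutions come from Heine's contiguous relations for `φ(c, x) = ₁φ₁(0; c; q², x z)`: with
`c` running through `q, q³, q⁵, …`, the relations for `φ(c q², x) - φ(c, x)` and
`φ(c q², x q²) - φ(c, x)`, applied in turn, solve the system with the weights `w_i`. Along
`x = q²` the same relations solve the system with the weights on lattice points and high peaks.
Up to the factor `1 / (1 - q)`, both sides of the identity thus have the generating function
`φ(q³, q²) / φ(q, 1)`, evaluated at `z²`.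
-/

section Paths

variable {L : ℕ}

lemma stepVal_val (s : Fin L → Bool) (i : Fin L) : stepVal s i = if s i then 1 else -1 := by
  simp [stepVal]

lemma stepVal_cons_succ (b : Bool) (s : Fin L → Bool) (j : ℕ) :
    stepVal (Fin.cons b s : Fin (L + 1) → Bool) (j + 1) = stepVal s j := by
  by_cases hj : j < L
  · have hcons := stepVal_val (Fin.cons b s : Fin (L + 1) → Bool) (Fin.succ ⟨j, hj⟩)
    rw [Fin.cons_succ, ← stepVal_val] at hcons
    exact hcons
  · simp [stepVal, hj]

lemma pht_zero (s : Fin L → Bool) : pht s 0 = 0 := sum_range_zero _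

lemma pht_cons_succ (b : Bool) (s : Fin L → Bool) (i : ℕ) :
    pht (Fin.cons b s : Fin (L + 1) → Bool) (i + 1) = (if b then 1 else -1) + pht s i := by
  have hfirst : stepVal (Fin.cons b s : Fin (L + 1) → Bool) 0 = if b then 1 else -1 :=
    stepVal_val (Fin.cons b s : Fin (L + 1) → Bool) 0
  simp only [pht, sum_range_succ', stepVal_cons_succ, hfirst, add_comm]

lemma pht_le (s : Fin L → Bool) (i : ℕ) : pht s i ≤ i := by
  calc pht s i ≤ ∑ _j ∈ range i, (1 : ℤ) := sum_le_sum fun j _ => by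
        unfold stepVal
        split_ifs <;> norm_num
    _ = i := by simp

lemma highPeaks_subset_range (s : Fin L → Bool) : highPeaks s ⊆ range L := fun i hi => by
  simp only [highPeaks, peaks, mem_filter, mem_Icc] at hi
  exact mem_range.mpr (by omega)

lemma val_mem_highPeaks_iff (s : Fin L → Bool) (i : Fin L) :
    (i : ℕ) ∈ highPeaks s ↔ (Fin.cons false s : Fin (L + 1) → Bool) i.castSucc = true ∧
      s i = false ∧ 2 ≤ (pht s i).toNat := by
  have hheight : 2 ≤ pht s i ↔ 2 ≤ (pht s i).toNat := by omega
  have hdown : stepVal s i = -1 ↔ s i = false := by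
    rw [stepVal_val]
    cases s i <;> simp
  rw [highPeaks, mem_filter, peaks, mem_filter, hheight, hdown, mem_Icc]
  obtain _ | L := L
  · exact i.elim0
  induction i using Fin.cases with
  | zero => simp
  | succ j =>
    have hup : stepVal s ((j.succ : ℕ) - 1) = 1 ↔ s j.castSucc = true := by
      rw [Fin.val_succ, Nat.add_sub_cancel, ← Fin.val_castSucc, stepVal_val]
      cases s j.castSucc <;> simp
    have hrange : 1 ≤ (j.succ : ℕ) ∧ (j.succ : ℕ) ≤ L + 1 - 1 := by
      simp only [Fin.val_succ]
      omega
    rw [hup, ← Fin.succ_castSucc, Fin.cons_succ, iff_true_intro hrange, true_and, and_assoc]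

/-- Dyck paths starting at height `h` instead of `0`: the path stays weakly above the `x`-axis and
ends on it. The height is an integer so that a down-step from height `0` gives a path which is not
a Dyck path. -/
def IsDyckFrom (h : ℤ) (s : Fin L → Bool) : Prop :=
  (∀ i ∈ range (L + 1), 0 ≤ h + pht s i) ∧ h + pht s L = 0

lemma IsDyckFrom.nonneg {h : ℤ} {s : Fin L → Bool} (hs : IsDyckFrom h s) : 0 ≤ h := by
  simpa [pht_zero] using hs.1 0 (by simp)

lemma isDyckFrom_zero_iff {s : Fin L → Bool} : IsDyckFrom 0 s ↔ IsDyck s := by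
  simp only [IsDyckFrom, IsDyck, zero_add]

lemma isDyckFrom_cons_iff {h : ℤ} {b : Bool} {s : Fin L → Bool} :
    IsDyckFrom h (Fin.cons b s : Fin (L + 1) → Bool) ↔
      0 ≤ h ∧ IsDyckFrom (h + if b then 1 else -1) s := by
  simp only [IsDyckFrom, pht_cons_succ, ← add_assoc, mem_range,
    Nat.forall_lt_succ_left (n := L + 1), pht_zero, add_zero, and_assoc]

end Paths

section PathSums

/-- The weight of a path starting at height `h`: the product over its steps of `f b' b y`, where
`y` is the height at which the step starts, `b` tells whether it is an up-step, and `b'` whether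
the step before it is one. The step before the first one is prescribed to be `p`. -/
def pathWeight {M : Type*} [CommMonoid M] (f : Bool → Bool → ℕ → M) (p : Bool) (h : ℤ) {L : ℕ}
    (s : Fin L → Bool) : M :=
  ∏ i : Fin L, f ((Fin.cons p s : Fin (L + 1) → Bool) i.castSucc) (s i) (h + pht s i).toNat

lemma pathWeight_cons {M : Type*} [CommMonoid M] (f : Bool → Bool → ℕ → M) (p b : Bool) (h : ℤ)
    {L : ℕ} (s : Fin L → Bool) :
    pathWeight f p h (Fin.cons b s : Fin (L + 1) → Bool) =
      f p b h.toNat * pathWeight f b (h + if b then 1 else -1) s := by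
  simp only [pathWeight, Fin.prod_univ_succ, Fin.castSucc_zero, Fin.cons_zero, Fin.val_zero,
    pht_zero, add_zero, ← Fin.succ_castSucc, Fin.cons_succ, Fin.val_succ, pht_cons_succ, add_assoc]

variable {R : Type*} [CommSemiring R]

/-- The total weight of the Dyck paths with `L` steps starting at height `h`. -/
def pathSum (f : Bool → Bool → ℕ → R) (L : ℕ) (p : Bool) (h : ℤ) : R :=
  ∑ s : Fin L → Bool with IsDyckFrom h s, pathWeight f p h s

lemma pathSum_zero_left (f : Bool → Bool → ℕ → R) (p : Bool) (h : ℤ) :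
    pathSum f 0 p h = if h = 0 then 1 else 0 := by
  have hdyck (s : Fin 0 → Bool) : IsDyckFrom h s ↔ h = 0 := by
    simpa [IsDyckFrom, pht_zero] using fun hh : h = 0 => hh.ge
  simp only [pathSum, sum_filter, hdyck, Fintype.sum_unique, pathWeight, univ_eq_empty, prod_empty]

lemma pathSum_of_neg (f : Bool → Bool → ℕ → R) (L : ℕ) (p : Bool) {h : ℤ} (hh : h < 0) :
    pathSum f L p h = 0 :=
  sum_eq_zero fun _ hs => absurd (mem_filter.mp hs).2.nonneg hh.not_ge

lemma pathSum_succ (f : Bool → Bool → ℕ → R) (L : ℕ) (p : Bool) {h : ℤ} (hh : 0 ≤ h) :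
    pathSum f (L + 1) p h = f p true h.toNat * pathSum f L true (h + 1) +
      f p false h.toNat * pathSum f L false (h - 1) := by
  simp only [pathSum, sum_filter, mul_sum]
  rw [← (Fin.consEquiv fun _ => Bool).sum_comp, Fintype.sum_prod_type, Fintype.sum_bool]
  simp only [Fin.consEquiv, Equiv.coe_fn_mk, isDyckFrom_cons_iff, hh, true_and, pathWeight_cons,
    if_true, Bool.false_eq_true, if_false, ← sub_eq_add_neg, mul_ite, mul_zero]

lemma sum_dyckPaths_pathWeight (f : Bool → Bool → ℕ → R) (L : ℕ) :
    ∑ s ∈ dyckPaths L, pathWeight f false 0 s = pathSum f L false 0 := by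
  simp only [pathSum, isDyckFrom_zero_iff, dyckPaths]

end PathSums

section FirstStepSystem

open PowerSeries

variable {R : Type*}

/-- The generating function of `pathSum` by the number of steps. -/
def pathSeries [CommSemiring R] (f : Bool → Bool → ℕ → R) (p : Bool) (h : ℕ) : R⟦X⟧ :=
  mk fun L => pathSum f L p h

/-- The linear system obtained by splitting off the first step of a path, with `β` in place of the
contribution `1` of the empty path. -/
structure IsFirstStepSystem [CommSemiring R] (f : Bool → Bool → ℕ → R) (β : R⟦X⟧)
    (N : Bool → ℕ → R⟦X⟧) : Prop where
  zero (p : Bool) : N p 0 = β + X * (C (f p true 0) * N true 1)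
  succ (p : Bool) (h : ℕ) : N p (h + 1) =
    X * (C (f p true (h + 1)) * N true (h + 2) + C (f p false (h + 1)) * N false h)

lemma isFirstStepSystem_pathSeries [CommSemiring R] (f : Bool → Bool → ℕ → R) :
    IsFirstStepSystem f 1 (pathSeries f) where
  zero p := by
    ext (_ | L)
    · simp [pathSeries, pathSum_zero_left]
    · simp [pathSeries, pathSum_succ, pathSum_of_neg, coeff_succ_X_mul, coeff_one]
  succ p h := by
    have hpos : (0 : ℤ) ≤ h + 1 := by positivity
    have hne : (h : ℤ) + 1 ≠ 0 := by positivity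
    have htoNat : ((h : ℤ) + 1).toNat = h + 1 := by omega
    ext (_ | L)
    · simp [pathSeries, pathSum_zero_left, hne]
    · simp [pathSeries, pathSum_succ _ _ _ hpos, coeff_succ_X_mul, htoNat, add_assoc]

variable [CommRing R] {f : Bool → Bool → ℕ → R} {β : R⟦X⟧} {N : Bool → ℕ → R⟦X⟧}

lemma IsFirstStepSystem.eq_zero (hN : IsFirstStepSystem f 0 N) (p : Bool) (h : ℕ) :
    N p h = 0 := by
  ext L
  induction L generalizing p h with
  | zero =>
    cases h with
    | zero => simp [hN.zero p]
    | succ h => simp [hN.succ p h]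
  | succ L ih =>
    cases h with
    | zero => simp [hN.zero p, coeff_succ_X_mul, ih]
    | succ h => simp [hN.succ p h, coeff_succ_X_mul, ih]

lemma IsFirstStepSystem.eq_mul_pathSeries (hN : IsFirstStepSystem f β N) (p : Bool) (h : ℕ) :
    N p h = β * pathSeries f p h := by
  have hW := isFirstStepSystem_pathSeries f
  have hdiff : IsFirstStepSystem f 0 fun p h => N p h - β * pathSeries f p h :=
    { zero := fun p => by
        rw [hN.zero, hW.zero]
        ring
      succ := fun p h => by
        rw [hN.succ, hW.succ]
        ring }
  exact sub_eq_zero.mp (hdiff.eq_zero p h)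

end FirstStepSystem

section UpSteps

/-- The step weights for which a path has weight `∏ w y` over the heights `y` at which its
up-steps start. -/
def upStepWeight {M : Type*} [One M] (w : ℕ → M) (_ b : Bool) (h : ℕ) : M := if b then w h else 1

lemma prod_pow_card_eq_pathWeight {M : Type*} [CommMonoid M] (w : ℕ → M) {L : ℕ}
    {s : Fin L → Bool} (hs : IsDyck s) :
    ∏ i ∈ range L, w i ^ #{j ∈ range L | stepVal s j = 1 ∧ pht s j = (i : ℤ)} =
      pathWeight (upStepWeight w) false 0 s := by
  have hstep (j : Fin L) :
      (∏ i ∈ range L, if stepVal s j = 1 ∧ pht s j = (i : ℤ) then w i else 1) =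
        upStepWeight w ((Fin.cons false s : Fin (L + 1) → Bool) j.castSucc) (s j)
          (0 + pht s j).toNat := by
    have hnonneg : 0 ≤ pht s j := hs.1 j (mem_range.mpr (by omega))
    have hlt : pht s j < L := (pht_le s j).trans_lt (by exact_mod_cast j.isLt)
    lift pht s j to ℕ using hnonneg with y
    cases hb : s j <;> simp_all [stepVal_val, upStepWeight]
  simp only [← prod_const, prod_filter]
  rw [prod_comm, prod_range]
  exact prod_congr rfl fun j _ => hstep j

open PowerSeries

variable {R : Type*} [CommRing R]

/-- Gauss's expansion of a quotient of contiguous series as a continued fraction, read as a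
generating function of Dyck paths. -/
lemma expand_eq_mul_pathSeries_upStepWeight {w : ℕ → R} {G : ℕ → R⟦X⟧}
    (hG : ∀ h, G (h + 1) = G h + C (w h) * X * G (h + 2)) :
    expand 2 two_ne_zero (G 1) =
      expand 2 two_ne_zero (G 0) * pathSeries (upStepWeight w) false 0 := by
  have hN : IsFirstStepSystem (upStepWeight w) (expand 2 two_ne_zero (G 0))
      fun _ h => X ^ h * expand 2 two_ne_zero (G (h + 1)) :=
    { zero := fun _ => by
        simp only [hG 0, upStepWeight, if_true, map_add, map_mul, expand_C, expand_X]
        ring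
      succ := fun _ h => by
        simp only [hG (h + 1), upStepWeight, if_true, Bool.false_eq_true, if_false, map_add,
          map_mul, map_one, expand_C, expand_X]
        ring }
  simpa using hN.eq_mul_pathSeries false 0

end UpSteps

section HighPeaks

/-- The step weights for which a path has weight `∏ v y` over the heights `y` of its lattice points
other than the last one, times `∏ u y` over the heights `y` of its high peaks. -/
def highPeakWeight {M : Type*} [MulOneClass M] (v u : ℕ → M) (p b : Bool) (h : ℕ) : M :=
  v h * if p = true ∧ b = false ∧ 2 ≤ h then u h else 1

lemma wtHigh_eq_mul_pathWeight {F : Type*} [Field F] (v u : ℕ → F) (a : ℤ) {L : ℕ}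
    {s : Fin L → Bool} (hs : IsDyck s) :
    wtHigh (fun P => v P.2) (fun P => u P.2) a s =
      v 0 * pathWeight (highPeakWeight v u) false 0 s := by
  have hpeaks : ∏ i ∈ highPeaks s, u (pht s i).toNat =
      ∏ i : Fin L, if (Fin.cons false s : Fin (L + 1) → Bool) i.castSucc = true ∧ s i = false ∧
        2 ≤ (pht s i).toNat then u (pht s i).toNat else 1 := by
    simp only [← val_mem_highPeaks_iff]
    rw [← prod_range fun i => if i ∈ highPeaks s then u (pht s i).toNat else 1, ← prod_filter,
      filter_mem_eq_inter, inter_eq_right.mpr (highPeaks_subset_range s)]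
  simp only [wtHigh, ptOf, pathWeight, highPeakWeight, zero_add, prod_mul_distrib]
  rw [hpeaks, prod_range_succ, hs.2, Int.toNat_zero, prod_range]
  ring

open PowerSeries

variable {R : Type*} [CommRing R]

lemma expand_eq_mul_pathSeries_highPeakWeight {v u : ℕ → R} {G : ℕ → R⟦X⟧} {β : R⟦X⟧}
    (hvu : ∀ h, v h * (1 - u h) = 1) (hzero : G 0 = β + C (v 0 * v 1) * X * G 1)
    (hsucc : ∀ h, G (h + 1) + C (v (h + 1)) * X * G (h + 1) =
      G h + C (v (h + 1) * v (h + 2)) * X * G (h + 2)) :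
    expand 2 two_ne_zero (G 0) =
      expand 2 two_ne_zero β * pathSeries (highPeakWeight v u) false 0 := by
  set A : ℕ → R⟦X⟧ := fun h => X ^ h * C (∏ i ∈ range h, v (i + 1)) * expand 2 two_ne_zero (G h)
    with hA
  have hA_zero : A 0 = expand 2 two_ne_zero β + X * (C (v 0) * A 1) := by
    simp only [hA, hzero, prod_range_succ, prod_range_zero, map_add, map_mul, map_one, expand_C,
      expand_X]
    ring
  have hA_succ (h : ℕ) :
      A (h + 1) = X * (C (v (h + 1)) * (A (h + 2) - X * A (h + 1) + A h)) := by
    have hG := congrArg (expand 2 two_ne_zero) (hsucc h)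
    simp only [hA, prod_range_succ, map_add, map_mul, expand_C, expand_X] at hG ⊢
    linear_combination X ^ (h + 1) * C (∏ i ∈ range h, v (i + 1)) * C (v (h + 1)) * hG
  have hvu' (h : ℕ) : C (v h) * (1 - C (u h)) = 1 := by
    rw [← map_one C, ← map_sub, ← map_mul, hvu]
  -- Turning a descent into a high peak multiplies its weight `v h` by `u h = 1 - 1 / v h`.
  have hN : IsFirstStepSystem (highPeakWeight v u) (expand 2 two_ne_zero β)
      fun p h => A h - if p = true ∧ 2 ≤ h then X * A (h - 1) else 0 :=
    { zero := fun p => by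
        simpa [highPeakWeight] using hA_zero
      succ := fun p h => by
        have hpeak : 2 ≤ h + 2 := Nat.le_add_left 2 h
        simp only [highPeakWeight, hpeak, true_and, and_true, if_true, Bool.true_eq_false,
          Bool.false_eq_true, false_and, and_false, if_false, mul_one, sub_zero,
          Nat.add_succ_sub_one]
        split_ifs
        · rw [map_mul]
          linear_combination hA_succ h + X * A h * hvu' (h + 1)
        · rw [mul_one]
          linear_combination hA_succ h }
  simpa [hA] using hN.eq_mul_pathSeries false 0

end HighPeaks

section BasicHypergeometric

open PowerSeries

variable {F : Type*} [Field F]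

/-- The basic hypergeometric series `₁φ₁(0; c; Q, x z)`, that is
`∑ⱼ (-1)ʲ Q^(j(j-1)/2) (x z)ʲ / ((Q; Q)ⱼ (c; Q)ⱼ)`, as a power series in `z`. -/
def basicHypSeries (Q c x : F) : F⟦X⟧ :=
  mk fun j => ∏ i ∈ range j, -(x * Q ^ i / ((1 - Q ^ (i + 1)) * (1 - c * Q ^ i)))

lemma coeff_succ_basicHypSeries (Q c x : F) (j : ℕ) :
    coeff (j + 1) (basicHypSeries Q c x) = coeff j (basicHypSeries Q c x) *
      -(x * Q ^ j / ((1 - Q ^ (j + 1)) * (1 - c * Q ^ j))) := by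
  simp [basicHypSeries, prod_range_succ]

lemma constantCoeff_basicHypSeries (Q c x : F) : constantCoeff (basicHypSeries Q c x) = 1 := by
  simp [basicHypSeries]

lemma coeff_basicHypSeries_mul_right (Q c x : F) (j : ℕ) :
    coeff j (basicHypSeries Q c (x * Q)) = Q ^ j * coeff j (basicHypSeries Q c x) := by
  induction j with
  | zero => simp [constantCoeff_basicHypSeries]
  | succ j ih =>
    rw [coeff_succ_basicHypSeries, coeff_succ_basicHypSeries, ih]
    ring

variable {Q c : F}

lemma one_sub_ne_zero_of_mul_pow_ne_one (hc : ∀ i : ℕ, c * Q ^ i ≠ 1) : 1 - c ≠ 0 :=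
  sub_ne_zero.mpr fun h => hc 0 (by rw [pow_zero, mul_one, ← h])

lemma mul_pow_ne_one_of_mul_pow_ne_one (hc : ∀ i : ℕ, c * Q ^ i ≠ 1) (i : ℕ) :
    c * Q * Q ^ i ≠ 1 := by
  rw [mul_assoc, ← pow_succ']
  exact hc (i + 1)

lemma one_sub_pow_succ_ne_zero (hQ : ¬ IsOfFinOrder Q) (j : ℕ) : 1 - Q ^ (j + 1) ≠ 0 :=
  sub_ne_zero.mpr fun h => hQ (isOfFinOrder_iff_pow_eq_one.mpr ⟨j + 1, j.succ_pos, h.symm⟩)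

lemma coeff_basicHypSeries_mul_left (hc : ∀ i : ℕ, c * Q ^ i ≠ 1) (x : F) (j : ℕ) :
    (1 - c * Q ^ j) * coeff j (basicHypSeries Q (c * Q) x) =
      (1 - c) * coeff j (basicHypSeries Q c x) := by
  induction j with
  | zero => simp [constantCoeff_basicHypSeries]
  | succ j ih =>
    have hcj := mul_inv_cancel₀ (sub_ne_zero.mpr (hc j).symm)
    have hcj' := mul_inv_cancel₀ (sub_ne_zero.mpr (hc (j + 1)).symm)
    rw [coeff_succ_basicHypSeries, coeff_succ_basicHypSeries, mul_assoc c Q, ← pow_succ']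
    set a := coeff j (basicHypSeries Q c x)
    set a' := coeff j (basicHypSeries Q (c * Q) x)
    simp only [div_eq_mul_inv, mul_inv]
    linear_combination x * Q ^ j * (1 - Q ^ (j + 1))⁻¹ *
      (a' * hcj - a' * hcj' - (1 - c * Q ^ j)⁻¹ * ih)

lemma coeff_succ_basicHypSeries_eq_mul_coeff (hc : ∀ i : ℕ, c * Q ^ i ≠ 1) (x : F) (j : ℕ) :
    coeff (j + 1) (basicHypSeries Q c x) =
      -(x * Q ^ j / ((1 - Q ^ (j + 1)) * (1 - c))) * coeff j (basicHypSeries Q (c * Q) x) := by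
  have hcj := mul_inv_cancel₀ (sub_ne_zero.mpr (hc j).symm)
  have hc0 := mul_inv_cancel₀ (one_sub_ne_zero_of_mul_pow_ne_one hc)
  have hshift := coeff_basicHypSeries_mul_left hc x j
  rw [coeff_succ_basicHypSeries]
  set a := coeff j (basicHypSeries Q c x)
  set a' := coeff j (basicHypSeries Q (c * Q) x)
  simp only [div_eq_mul_inv, mul_inv]
  linear_combination x * Q ^ j * (1 - Q ^ (j + 1))⁻¹ *
    (a * (1 - c * Q ^ j)⁻¹ * hc0 - a' * (1 - c)⁻¹ * hcj + (1 - c * Q ^ j)⁻¹ * (1 - c)⁻¹ * hshift)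

lemma basicHypSeries_mul_right (hQ : ¬ IsOfFinOrder Q) (hc : ∀ i : ℕ, c * Q ^ i ≠ 1) (x : F) :
    basicHypSeries Q c (x * Q) = basicHypSeries Q c x +
      C (x / (1 - c)) * X * basicHypSeries Q (c * Q) (x * Q) := by
  ext (_ | j)
  · simp [constantCoeff_basicHypSeries]
  · have hQj : 1 - Q ^ (j + 1) ≠ 0 := one_sub_pow_succ_ne_zero hQ j
    have hc0 : 1 - c ≠ 0 := one_sub_ne_zero_of_mul_pow_ne_one hc
    rw [map_add, mul_assoc, coeff_C_mul, coeff_succ_X_mul, coeff_basicHypSeries_mul_right,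
      coeff_basicHypSeries_mul_right, coeff_succ_basicHypSeries_eq_mul_coeff hc]
    field_simp
    ring

lemma basicHypSeries_mul_left (hQ : ¬ IsOfFinOrder Q) (hc : ∀ i : ℕ, c * Q ^ i ≠ 1) (x : F) :
    basicHypSeries Q (c * Q) x = basicHypSeries Q c x +
      C (x * c / ((1 - c) * (1 - c * Q))) * X * basicHypSeries Q (c * Q * Q) (x * Q) := by
  have hcQ := mul_pow_ne_one_of_mul_pow_ne_one hc
  ext (_ | j)
  · simp [constantCoeff_basicHypSeries]
  · have hQj : 1 - Q ^ (j + 1) ≠ 0 := one_sub_pow_succ_ne_zero hQ j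
    have hc0 : 1 - c ≠ 0 := one_sub_ne_zero_of_mul_pow_ne_one hc
    have hcQ0 : 1 - c * Q ≠ 0 := one_sub_ne_zero_of_mul_pow_ne_one hcQ
    have hshift : coeff (j + 1) (basicHypSeries Q c x) =
        (1 - c * Q ^ (j + 1)) / (1 - c) * coeff (j + 1) (basicHypSeries Q (c * Q) x) := by
      rw [div_mul_eq_mul_div, coeff_basicHypSeries_mul_left hc, mul_div_cancel_left₀ _ hc0]
    rw [map_add, mul_assoc, coeff_C_mul, coeff_succ_X_mul, hshift,
      coeff_succ_basicHypSeries_eq_mul_coeff hcQ, coeff_basicHypSeries_mul_right]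
    field_simp
    ring

lemma basicHypSeries_mul_mul (hQ : ¬ IsOfFinOrder Q) (hc : ∀ i : ℕ, c * Q ^ i ≠ 1) (x : F) :
    basicHypSeries Q (c * Q) (x * Q) = basicHypSeries Q c x +
      C (x / ((1 - c) * (1 - c * Q))) * X * basicHypSeries Q (c * Q * Q) (x * Q) := by
  have hcQ := mul_pow_ne_one_of_mul_pow_ne_one hc
  have hcoeff : x / ((1 - c) * (1 - c * Q)) =
      x * c / ((1 - c) * (1 - c * Q)) + x / (1 - c * Q) := by
    have hc0 : 1 - c ≠ 0 := one_sub_ne_zero_of_mul_pow_ne_one hc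
    have hcQ0 : 1 - c * Q ≠ 0 := one_sub_ne_zero_of_mul_pow_ne_one hcQ
    field_simp
    ring
  rw [basicHypSeries_mul_right hQ hcQ, basicHypSeries_mul_left hQ hc, hcoeff, map_add]
  ring

end BasicHypergeometric

section Comparison

variable {F : Type*} [Field F] {q : F}

/-- The weight `w_i` of an up-step starting at height `i`. -/
def upWeight (q : F) (i : ℕ) : F :=
  if i % 2 = 0 then q ^ i / ((1 - q ^ (2 * i + 1)) * (1 - q ^ (2 * i + 3)))
  else q ^ (3 * i + 2) / ((1 - q ^ (2 * i + 1)) * (1 - q ^ (2 * i + 3)))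

/-- The series `₁φ₁(0; q^(2k+1); q², q^(2t) z)`, a grid on which the contiguous relations move. -/
def gridSeries (q : F) (t k : ℕ) : PowerSeries F :=
  basicHypSeries (q ^ 2) (q ^ (2 * k + 1)) (q ^ (2 * t))

open PowerSeries

lemma not_isOfFinOrder_sq (hq : ¬ IsOfFinOrder q) : ¬ IsOfFinOrder (q ^ 2) :=
  fun h => hq (h.of_pow two_ne_zero)

lemma pow_odd_mul_sq_pow_ne_one (hq : ¬ IsOfFinOrder q) (k i : ℕ) :
    q ^ (2 * k + 1) * (q ^ 2) ^ i ≠ 1 := fun h =>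
  hq (isOfFinOrder_iff_pow_eq_one.mpr ⟨2 * k + 1 + 2 * i, by omega, by rw [pow_add, pow_mul, h]⟩)

lemma gridSeries_succ_left (hq : ¬ IsOfFinOrder q) (t k : ℕ) :
    gridSeries q (t + 1) k = gridSeries q t k +
      C (q ^ (2 * t) / (1 - q ^ (2 * k + 1))) * X * gridSeries q (t + 1) (k + 1) := by
  have h := basicHypSeries_mul_right (not_isOfFinOrder_sq hq) (pow_odd_mul_sq_pow_ne_one hq k)
    (q ^ (2 * t))
  simp only [← pow_add] at h
  exact h

lemma gridSeries_succ_right (hq : ¬ IsOfFinOrder q) (t k : ℕ) :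
    gridSeries q t (k + 1) = gridSeries q t k +
      C (q ^ (2 * t + (2 * k + 1)) / ((1 - q ^ (2 * k + 1)) * (1 - q ^ (2 * k + 3)))) * X *
        gridSeries q (t + 1) (k + 2) := by
  have h := basicHypSeries_mul_left (not_isOfFinOrder_sq hq) (pow_odd_mul_sq_pow_ne_one hq k)
    (q ^ (2 * t))
  simp only [← pow_add] at h
  exact h

lemma gridSeries_succ_succ (hq : ¬ IsOfFinOrder q) (t k : ℕ) :
    gridSeries q (t + 1) (k + 1) = gridSeries q t k +
      C (q ^ (2 * t) / ((1 - q ^ (2 * k + 1)) * (1 - q ^ (2 * k + 3)))) * X *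
        gridSeries q (t + 1) (k + 2) := by
  have h := basicHypSeries_mul_mul (not_isOfFinOrder_sq hq) (pow_odd_mul_sq_pow_ne_one hq k)
    (q ^ (2 * t))
  simp only [← pow_add] at h
  exact h

lemma gridSeries_upWeight (hq : ¬ IsOfFinOrder q) (h : ℕ) :
    gridSeries q ((h + 1 + 1) / 2) (h + 1) = gridSeries q ((h + 1) / 2) h +
      C (upWeight q h) * X * gridSeries q ((h + 2 + 1) / 2) (h + 2) := by
  obtain ⟨m, rfl | rfl⟩ := h.even_or_odd'
  · have hw : upWeight q (2 * m) =
        q ^ (2 * m) / ((1 - q ^ (2 * (2 * m) + 1)) * (1 - q ^ (2 * (2 * m) + 3))) :=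
      if_pos (by omega)
    rw [show (2 * m + 1 + 1) / 2 = m + 1 by omega, show (2 * m + 1) / 2 = m by omega,
      show (2 * m + 2 + 1) / 2 = m + 1 by omega, hw]
    exact gridSeries_succ_succ hq m (2 * m)
  · have hw : upWeight q (2 * m + 1) = q ^ (2 * (m + 1) + (2 * (2 * m + 1) + 1)) /
        ((1 - q ^ (2 * (2 * m + 1) + 1)) * (1 - q ^ (2 * (2 * m + 1) + 3))) := by
      rw [upWeight, if_neg (by omega), show 3 * (2 * m + 1) + 2 =
        2 * (m + 1) + (2 * (2 * m + 1) + 1) by ring]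
    rw [show (2 * m + 1 + 1 + 1) / 2 = m + 1 by omega, show (2 * m + 1 + 1) / 2 = m + 1 by omega,
      show (2 * m + 1 + 2 + 1) / 2 = m + 1 + 1 by omega, hw]
    exact gridSeries_succ_right hq (m + 1) (2 * m + 1)

lemma expand_gridSeries_eq_mul_upWeight (hq : ¬ IsOfFinOrder q) :
    expand 2 two_ne_zero (gridSeries q 1 1) = expand 2 two_ne_zero (gridSeries q 0 0) *
      pathSeries (upStepWeight (upWeight q)) false 0 := by
  have h := expand_eq_mul_pathSeries_upStepWeight (w := upWeight q)
    (G := fun h => gridSeries q ((h + 1) / 2) h) (gridSeries_upWeight hq)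
  have hone : (1 + 1) / 2 = 1 := rfl
  have hzero : (0 + 1) / 2 = 0 := rfl
  simpa only [hone, hzero] using h

lemma expand_gridSeries_eq_mul_highPeakWeight (hq : ¬ IsOfFinOrder q) :
    expand 2 two_ne_zero (gridSeries q 1 1) = expand 2 two_ne_zero (gridSeries q 0 0) *
      pathSeries (highPeakWeight (fun h => (1 - q ^ (2 * h + 1))⁻¹) fun h => q ^ (2 * h + 1))
        false 0 := by
  have hdiag (h : ℕ) : gridSeries q 1 (h + 1) = gridSeries q 0 h +
      C ((1 - q ^ (2 * h + 1))⁻¹ * (1 - q ^ (2 * (h + 1) + 1))⁻¹) * X *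
        gridSeries q 1 (h + 2) := by
    rw [gridSeries_succ_succ hq 0 h, mul_zero, pow_zero, one_div, mul_inv]
    rfl
  have hleft (h : ℕ) : gridSeries q 1 h = gridSeries q 0 h +
      C (1 - q ^ (2 * h + 1))⁻¹ * X * gridSeries q 1 (h + 1) := by
    rw [gridSeries_succ_left hq 0 h, mul_zero, pow_zero, one_div]
  exact expand_eq_mul_pathSeries_highPeakWeight (G := fun h => gridSeries q 1 (h + 1))
    (fun h => inv_mul_cancel₀ (one_sub_pow_succ_ne_zero hq (2 * h))) (hdiag 0)
    fun h => by linear_combination hdiag (h + 1) - hleft (h + 1)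

lemma pathSum_highPeakWeight_eq_pathSum_upStepWeight (hq : ¬ IsOfFinOrder q) (L : ℕ) :
    pathSum (highPeakWeight (fun h => (1 - q ^ (2 * h + 1))⁻¹) fun h => q ^ (2 * h + 1))
      L false 0 = pathSum (upStepWeight (upWeight q)) L false 0 := by
  have hne : expand 2 two_ne_zero (gridSeries q 0 0) ≠ 0 := fun h => by
    simpa [gridSeries, constantCoeff_basicHypSeries] using congrArg constantCoeff h
  have hseries := mul_left_cancel₀ hne
    ((expand_gridSeries_eq_mul_highPeakWeight hq).symm.trans (expand_gridSeries_eq_mul_upWeight hq))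
  simpa [pathSeries] using congrArg (coeff L) hseries

lemma zpow_sum_highPeaks_mul_prod_eq_wtHigh (q : F) {L : ℕ} {s : Fin L → Bool} (hs : IsDyck s) :
    q ^ (∑ i ∈ highPeaks s, (2 * pht s i + 1)) *
        ∏ i ∈ range (L + 1), (1 - q ^ (2 * pht s i + 1))⁻¹ =
      wtHigh (fun P => (1 - q ^ (2 * P.2 + 1))⁻¹) (fun P => q ^ (2 * P.2 + 1)) 0 s := by
  have hheight {i : ℕ} (hi : i ∈ range (L + 1)) :
      2 * pht s i + 1 = ((2 * (pht s i).toNat + 1 : ℕ) : ℤ) := by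
    have := hs.1 i hi
    omega
  have hpeak {i : ℕ} (hi : i ∈ highPeaks s) : i ∈ range (L + 1) :=
    range_subset_range.mpr L.le_succ (highPeaks_subset_range s hi)
  rw [sum_congr rfl fun i hi => hheight (hpeak hi), ← Nat.cast_sum, zpow_natCast,
    ← prod_pow_eq_pow_sum, mul_comm,
    prod_congr rfl fun i hi => by rw [hheight hi, zpow_natCast]]
  rfl

end Comparison

lemma not_isOfFinOrder_ratFuncX {K : Type*} [Field K] :
    ¬ IsOfFinOrder (RatFunc.X : RatFunc K) := fun hfin => by
  obtain ⟨n, hn, hXn⟩ := isOfFinOrder_iff_pow_eq_one.mp hfin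
  exact (RatFunc.transcendental_X (K := K)).pow hn (hXn ▸ isAlgebraic_one)

theorem statement_2_general {F : Type*} [Field F] {q : F} (hq : ¬ IsOfFinOrder q) (n : ℕ) :
    (∑ s ∈ dyckPaths (2 * n), q ^ (∑ i ∈ highPeaks s, (2 * pht s i + 1)) *
        ∏ i ∈ range (2 * n + 1), (1 - q ^ (2 * pht s i + 1))⁻¹) =
      (1 - q)⁻¹ * ∑ s ∈ dyckPaths (2 * n), ∏ i ∈ range (2 * n),
        upWeight q i ^ #{j ∈ range (2 * n) | stepVal s j = 1 ∧ pht s j = (i : ℤ)} := by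
  have hdyck {s : Fin (2 * n) → Bool} (hs : s ∈ dyckPaths (2 * n)) : IsDyck s :=
    (mem_filter.mp hs).2
  set v : ℕ → F := fun h => (1 - q ^ (2 * h + 1))⁻¹ with hv
  set u : ℕ → F := fun h => q ^ (2 * h + 1)
  calc _ = ∑ s ∈ dyckPaths (2 * n), v 0 * pathWeight (highPeakWeight v u) false 0 s :=
        sum_congr rfl fun s hs => (zpow_sum_highPeaks_mul_prod_eq_wtHigh q (hdyck hs)).trans
          (wtHigh_eq_mul_pathWeight v u 0 (hdyck hs))
    _ = v 0 * pathSum (highPeakWeight v u) (2 * n) false 0 := by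
        rw [← mul_sum, sum_dyckPaths_pathWeight]
    _ = v 0 * ∑ s ∈ dyckPaths (2 * n), pathWeight (upStepWeight (upWeight q)) false 0 s := by
        rw [pathSum_highPeakWeight_eq_pathSum_upStepWeight hq, sum_dyckPaths_pathWeight]
    _ = _ := by
        rw [sum_congr rfl fun s hs => prod_pow_card_eq_pathWeight (upWeight q) (hdyck hs)]
        simp [hv]

theorem statement_2 (n : ℕ) :
    (∑ s ∈ dyckPaths (2 * n),
        (RatFunc.X : RatFunc ℚ) ^ (∑ i ∈ highPeaks s, (2 * pht s i + 1)) *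
          ∏ i ∈ Finset.range (2 * n + 1),
            (1 - (RatFunc.X : RatFunc ℚ) ^ (2 * pht s i + 1))⁻¹) =
      (1 - (RatFunc.X : RatFunc ℚ))⁻¹ *
        ∑ s ∈ dyckPaths (2 * n), ∏ i ∈ Finset.range (2 * n),
          (if i % 2 = 0 then
              (RatFunc.X : RatFunc ℚ) ^ i /
                ((1 - (RatFunc.X : RatFunc ℚ) ^ (2 * i + 1)) *
                  (1 - (RatFunc.X : RatFunc ℚ) ^ (2 * i + 3)))
            else
              (RatFunc.X : RatFunc ℚ) ^ (3 * i + 2) /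
                ((1 - (RatFunc.X : RatFunc ℚ) ^ (2 * i + 1)) *
                  (1 - (RatFunc.X : RatFunc ℚ) ^ (2 * i + 3)))) ^
            ((Finset.range (2 * n)).filter fun j =>
              stepVal s j = 1 ∧ pht s j = (i : ℤ)).card := by
  exact statement_2_general not_isOfFinOrder_ratFuncX n

end Paper
end
end
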